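/- arXiv:2306.04258 — 2 statements merged into one kernel-verified Lean document; each statement's English description precedes it below -/
import Mathlib

section
/- Let (b₁,b₂) ∈ B with b₃ = (b₁b₂)^(−1), and assume G^S₊(b₁,b₃,b₂) ≥ 0 (i.e., (b₁,b₂) lies in B_{S₃}, the existence region of the S₃ Riemann ellipsoids). Put N₊ = N^S₊(b₁,b₃,b₂) and N₋ = N^S₋(b₁,b₃,b₂), and set L = N₊, R = |N₋|. Then the point p* = (b₁, b₂, 0, 0, 0, 0, N₊, 0, 0, N₋) is an equilibrium of the reduced equations of motion, and p* is Liapunov stable relative to S_{L,R}. -/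
open Real MeasureTheory

/-- `C₁(x,y,z) = 2πg ∫₀^∞ s·((s+x²)(s+y²)(s+z²))^(−3/2) ds`. -/
noncomputable def riC1 (g x y z : ℝ) : ℝ :=
  2 * π * g * ∫ s in Set.Ioi (0:ℝ),
    s * ((s + x ^ 2) * (s + y ^ 2) * (s + z ^ 2)) ^ (-(3:ℝ)/2)

/-- `C₂(x,y,z) = 2πg ∫₀^∞ s²·((s+x²)(s+y²)(s+z²))^(−3/2) ds`. -/
noncomputable def riC2 (g x y z : ℝ) : ℝ :=
  2 * π * g * ∫ s in Set.Ioi (0:ℝ),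
    s ^ 2 * ((s + x ^ 2) * (s + y ^ 2) * (s + z ^ 2)) ^ (-(3:ℝ)/2)

/-- `G^S₊(x,y,z)`. -/
noncomputable def GSp (g x y z : ℝ) : ℝ :=
  ((x - z) ^ 4 / (x * z)) *
    ((x * y ^ 2 * z + (x ^ 2 * y ^ 2 - x ^ 2 * z ^ 2 + y ^ 2 * z ^ 2)) * riC1 g x y z
      + (x * z + y ^ 2) * riC2 g x y z)

/-- `G^S₋(x,y,z)`. -/
noncomputable def GSm (g x y z : ℝ) : ℝ :=
  ((x + z) ^ 4 / (x * z)) *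
    ((x * y ^ 2 * z - (x ^ 2 * y ^ 2 - x ^ 2 * z ^ 2 + y ^ 2 * z ^ 2)) * riC1 g x y z
      + (x * z - y ^ 2) * riC2 g x y z)

/-- `N^S₊(x,y,z) = ½(√G^S₊ + √G^S₋)`. -/
noncomputable def NSp (g x y z : ℝ) : ℝ :=
  (Real.sqrt (GSp g x y z) + Real.sqrt (GSm g x y z)) / 2

/-- `N^S₋(x,y,z) = ½(√G^S₊ − √G^S₋)`. -/
noncomputable def NSm (g x y z : ℝ) : ℝ :=
  (Real.sqrt (GSp g x y z) - Real.sqrt (GSm g x y z)) / 2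

/-- Membership in `B = {(b₁,b₂) : b₁ > b₂ > b₁^(−1/2) > 0}`. -/
def memB (b1 b2 : ℝ) : Prop := b2 < b1 ∧ (Real.sqrt b1)⁻¹ < b2 ∧ 0 < (Real.sqrt b1)⁻¹

/-- The reduced Hamiltonian `H(b₁,b₂,c₁,c₂,m₁,…,m₆)` of the Riemann ellipsoid problem,
as a function on `ℝ¹⁰` (coordinates `p 0 = b₁, p 1 = b₂, p 2 = c₁, p 3 = c₂,
p 4,…,p 9 = m₁,…,m₆`), with `b₃ = (b₁b₂)⁻¹`. -/
noncomputable def Hred (g : ℝ) (p : Fin 10 → ℝ) : ℝ :=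
  let b1 := p 0; let b2 := p 1; let c1 := p 2; let c2 := p 3
  let m1 := p 4; let m2 := p 5; let m3 := p 6
  let m4 := p 7; let m5 := p 8; let m6 := p 9
  let b3 := (b1 * b2)⁻¹
  ((b2 ^ 2 + b3 ^ 2) * b1 ^ 2 * c1 ^ 2 + (b1 ^ 2 + b3 ^ 2) * b2 ^ 2 * c2 ^ 2
        - 2 * b3 * c1 * c2) /
      (2 * (b1 ^ 2 * b2 ^ 2 + b1 ^ 2 * b3 ^ 2 + b2 ^ 2 * b3 ^ 2))
    + ((b1 ^ 2 + b2 ^ 2) * (m3 ^ 2 + m6 ^ 2) + 4 * b1 * b2 * m3 * m6) /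
        (2 * (b1 ^ 2 - b2 ^ 2) ^ 2)
    + ((b1 ^ 2 + b3 ^ 2) * (m2 ^ 2 + m5 ^ 2) + 4 * b1 * b3 * m2 * m5) /
        (2 * (b1 ^ 2 - b3 ^ 2) ^ 2)
    + ((b2 ^ 2 + b3 ^ 2) * (m1 ^ 2 + m4 ^ 2) + 4 * b2 * b3 * m1 * m4) /
        (2 * (b2 ^ 2 - b3 ^ 2) ^ 2)
    - 2 * π * g * ∫ s in Set.Ioi (0:ℝ),
        ((s + b1 ^ 2) * (s + b2 ^ 2) * (s + b3 ^ 2)) ^ (-(1:ℝ)/2)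

/-- Partial derivative `∂H/∂pᵢ`. -/
noncomputable def pd (g : ℝ) (i : Fin 10) (p : Fin 10 → ℝ) : ℝ :=
  fderiv ℝ (Hred g) p (Pi.single i 1)

/-- The reduced vector field: `b' = ∂H/∂c`, `c' = −∂H/∂b`, `η_l' = η_l × ∇_{η_l}H`,
`η_r' = η_r × ∇_{η_r}H`. -/
noncomputable def RVF (g : ℝ) (p : Fin 10 → ℝ) : Fin 10 → ℝ :=
  ![pd g 2 p, pd g 3 p, -pd g 0 p, -pd g 1 p,
    p 5 * pd g 6 p - p 6 * pd g 5 p,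
    p 6 * pd g 4 p - p 4 * pd g 6 p,
    p 4 * pd g 5 p - p 5 * pd g 4 p,
    p 8 * pd g 9 p - p 9 * pd g 8 p,
    p 9 * pd g 7 p - p 7 * pd g 9 p,
    p 7 * pd g 8 p - p 8 * pd g 7 p]

/-- `γ` is a solution of the reduced equations of motion on the set `s ⊂ ℝ`
(staying in the domain `B × ℝ² × ℝ³ × ℝ³`). -/
def IsSolution (g : ℝ) (γ : ℝ → Fin 10 → ℝ) (s : Set ℝ) : Prop :=
  ∀ t ∈ s, memB (γ t 0) (γ t 1) ∧
    ∀ i : Fin 10, HasDerivAt (fun τ => γ τ i) (RVF g (γ t) i) t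

/-- Liapunov stability of an equilibrium `pstar` relative to
`S_{L,R} = {(b,c,η_l,η_r) : ‖η_l‖ = L, ‖η_r‖ = R}`. -/
def LiapunovStable (g L R : ℝ) (pstar : Fin 10 → ℝ) : Prop :=
  ∀ ε > 0, ∃ δ > 0, ∀ (T : ℝ) (γ : ℝ → Fin 10 → ℝ),
    IsSolution g γ (Set.Ico 0 T) →
    Real.sqrt ((γ 0 4) ^ 2 + (γ 0 5) ^ 2 + (γ 0 6) ^ 2) = L →
    Real.sqrt ((γ 0 7) ^ 2 + (γ 0 8) ^ 2 + (γ 0 9) ^ 2) = R →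
    dist (γ 0) pstar < δ →
    ∀ t ∈ Set.Ico (0:ℝ) T, dist (γ t) pstar < ε

/-!
The energy `H` and the norms of the two momenta are conserved, so it suffices that the ellipsoid is
a strict local minimum of `H` on the product of momentum spheres.

Completing squares in the transverse momenta bounds `H` below, on the momentum spheres near the
ellipsoid, by the energy of the planar state with the same axes `b₁`, `b₂`; this leaves a function
of `(b₁, b₂)` at fixed momenta. In the dimensionless variables `ζ = b₂ / b₁`, `ξ = b₁ / b₂`,
`μ = b₃² / (b₁ b₂)` its gravitational part is the total mass of the measure
`((t + μ)(t + ζ)(t + ξ))^(-1/2) dt` on `t > 0`, whose second variation is a combination of moments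
of this measure. Integrating by parts relates these moments to each other, and by pointwise
estimates of the integrands it also bounds their ratios; with these bounds, positivity of the
second variation follows from a polynomial inequality.
-/

open Filter Topology Asymptotics

section EllipsoidMeasure

variable {μ ζ ξ : ℝ}

/-- The weight `((t + μ)(t + ζ)(t + ξ))^(-1/2)` of the potential integrals of an ellipsoid whose
squared semi-axes are `μ`, `ζ`, `ξ`. -/
noncomputable def ellipsoidWeight (μ ζ ξ t : ℝ) : ℝ := (√((t + μ) * (t + ζ) * (t + ξ)))⁻¹

/-- The measure on the positive half line with density `ellipsoidWeight μ ζ ξ`; the integrals of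
the potential theory of ellipsoids are integrals of rational functions against it. -/
noncomputable def ellipsoidMeasure (μ ζ ξ : ℝ) : Measure ℝ :=
  (volume.restrict (Set.Ioi 0)).withDensity fun t ↦ ENNReal.ofReal (ellipsoidWeight μ ζ ξ t)

lemma measurable_ellipsoidWeight : Measurable (ellipsoidWeight μ ζ ξ) := by
  unfold ellipsoidWeight; fun_prop

lemma ellipsoidWeight_nonneg (t : ℝ) : 0 ≤ ellipsoidWeight μ ζ ξ t := by
  unfold ellipsoidWeight; positivity

lemma ellipsoidWeight_pos (hμ : 0 < μ) (hζ : 0 < ζ) (hξ : 0 < ξ) {t : ℝ} (ht : 0 ≤ t) :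
    0 < ellipsoidWeight μ ζ ξ t := by
  unfold ellipsoidWeight; positivity

lemma integral_ellipsoidMeasure (h : ℝ → ℝ) :
    ∫ t, h t ∂ellipsoidMeasure μ ζ ξ = ∫ t in Set.Ioi 0, ellipsoidWeight μ ζ ξ t * h t := by
  rw [ellipsoidMeasure, integral_withDensity_eq_integral_toReal_smul
    measurable_ellipsoidWeight.ennreal_ofReal (ae_of_all _ fun _ ↦ ENNReal.ofReal_lt_top)]
  simp only [ENNReal.toReal_ofReal (ellipsoidWeight_nonneg _), smul_eq_mul]

lemma integrable_ellipsoidMeasure_iff {h : ℝ → ℝ} :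
    Integrable h (ellipsoidMeasure μ ζ ξ) ↔
      IntegrableOn (fun t ↦ ellipsoidWeight μ ζ ξ t * h t) (Set.Ioi 0) := by
  rw [ellipsoidMeasure, integrable_withDensity_iff_integrable_smul'
    measurable_ellipsoidWeight.ennreal_ofReal (ae_of_all _ fun _ ↦ ENNReal.ofReal_lt_top)]
  simp only [ENNReal.toReal_ofReal (ellipsoidWeight_nonneg _), smul_eq_mul, IntegrableOn]

lemma ae_pos_ellipsoidMeasure : ∀ᵐ t ∂ellipsoidMeasure μ ζ ξ, 0 < t :=
  (withDensity_absolutelyContinuous _ _).ae_le (ae_restrict_mem measurableSet_Ioi)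

lemma hasDerivAt_ellipsoidWeight (hμ : 0 < μ) (hζ : 0 < ζ) (hξ : 0 < ξ) {t : ℝ} (ht : 0 ≤ t) :
    HasDerivAt (ellipsoidWeight μ ζ ξ)
      (-(1 / 2) * ellipsoidWeight μ ζ ξ t * ((t + μ)⁻¹ + (t + ζ)⁻¹ + (t + ξ)⁻¹)) t := by
  have hpos : 0 < (t + μ) * (t + ζ) * (t + ξ) := by positivity
  have hpoly : HasDerivAt (fun t ↦ (t + μ) * (t + ζ) * (t + ξ))
      ((1 * (t + ζ) + (t + μ) * 1) * (t + ξ) + (t + μ) * (t + ζ) * 1) t :=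
    (((hasDerivAt_id t).add_const μ).mul ((hasDerivAt_id t).add_const ζ)).mul
      ((hasDerivAt_id t).add_const ξ)
  refine ((hpoly.sqrt hpos.ne').inv (by positivity)).congr_deriv ?_
  rw [ellipsoidWeight, sq_sqrt hpos.le]
  field_simp

lemma exists_ellipsoidWeight_le (hμ : 0 < μ) (hζ : 0 < ζ) (hξ : 0 < ξ) :
    ∃ C > 0, ∀ t, 0 ≤ t → ellipsoidWeight μ ζ ξ t ≤ C * (1 + t) ^ (-(3 / 2) : ℝ) := by
  obtain ⟨m, hm, hm1, hmμ, hmζ, hmξ⟩ :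
      ∃ m : ℝ, 0 < m ∧ m ≤ 1 ∧ m ≤ μ ∧ m ≤ ζ ∧ m ≤ ξ :=
    ⟨min 1 (min μ (min ζ ξ)), by positivity, by simp, by simp, by simp, by simp⟩
  refine ⟨(√(m ^ 3))⁻¹, by positivity, fun t ht ↦ ?_⟩
  have factor_le {a : ℝ} (ha : m ≤ a) : m * (1 + t) ≤ t + a := by nlinarith
  have hrpow : (1 + t) ^ (-(3 / 2) : ℝ) = (√((1 + t) ^ 3))⁻¹ := by
    rw [rpow_neg (by positivity), sqrt_eq_rpow, ← rpow_natCast, ← rpow_mul (by positivity)]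
    norm_num
  rw [hrpow, ← mul_inv, ← sqrt_mul (by positivity), ellipsoidWeight]
  refine inv_anti₀ (by positivity) (sqrt_le_sqrt ?_)
  rw [show m ^ 3 * (1 + t) ^ 3 = m * (1 + t) * (m * (1 + t)) * (m * (1 + t)) by ring]
  exact mul_le_mul (mul_le_mul (factor_le hmμ) (factor_le hmζ) (by positivity) (by positivity))
    (factor_le hmξ) (by positivity) (by positivity)

lemma integrableOn_ellipsoidWeight (hμ : 0 < μ) (hζ : 0 < ζ) (hξ : 0 < ξ) :
    IntegrableOn (ellipsoidWeight μ ζ ξ) (Set.Ioi 0) := by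
  obtain ⟨C, -, hC⟩ := exists_ellipsoidWeight_le hμ hζ hξ
  have hmajorant : Integrable fun t : ℝ ↦ (1 + ‖t‖) ^ (-(3 / 2) : ℝ) :=
    integrable_one_add_norm (by norm_num)
  refine (hmajorant.const_mul C).integrableOn.mono'
    measurable_ellipsoidWeight.aestronglyMeasurable ?_
  filter_upwards [ae_restrict_mem measurableSet_Ioi] with t ht
  rw [norm_of_nonneg (ellipsoidWeight_nonneg t), norm_of_nonneg (le_of_lt ht)]
  exact hC t (le_of_lt ht)

lemma isFiniteMeasure_ellipsoidMeasure (hμ : 0 < μ) (hζ : 0 < ζ) (hξ : 0 < ξ) :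
    IsFiniteMeasure (ellipsoidMeasure μ ζ ξ) := by
  rw [← integrable_const_iff_isFiniteMeasure (c := (1 : ℝ)) one_ne_zero,
    integrable_ellipsoidMeasure_iff]
  simpa only [mul_one] using integrableOn_ellipsoidWeight hμ hζ hξ

lemma integrable_ellipsoidMeasure_of_bound (hμ : 0 < μ) (hζ : 0 < ζ) (hξ : 0 < ξ) {h : ℝ → ℝ}
    (hh : Measurable h) {C : ℝ} (hC : ∀ t, 0 < t → |h t| ≤ C) :
    Integrable h (ellipsoidMeasure μ ζ ξ) := by
  have := isFiniteMeasure_ellipsoidMeasure hμ hζ hξ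
  exact .of_bound hh.aestronglyMeasurable C (ae_pos_ellipsoidMeasure.mono hC)

lemma integral_ellipsoidMeasure_pos (hμ : 0 < μ) (hζ : 0 < ζ) (hξ : 0 < ξ) {h : ℝ → ℝ}
    (hh : Integrable h (ellipsoidMeasure μ ζ ξ)) (hpos : ∀ t, 0 < t → 0 < h t) :
    0 < ∫ t, h t ∂ellipsoidMeasure μ ζ ξ := by
  have hprod : ∀ t ∈ Set.Ioi (0 : ℝ), 0 < ellipsoidWeight μ ζ ξ t * h t := fun t ht ↦
    mul_pos (ellipsoidWeight_pos hμ hζ hξ (le_of_lt ht)) (hpos t ht)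
  rw [integral_ellipsoidMeasure, setIntegral_pos_iff_support_of_nonneg_ae
    ((ae_restrict_mem measurableSet_Ioi).mono fun t ht ↦ (hprod t ht).le)
    (integrable_ellipsoidMeasure_iff.1 hh)]
  have hsupport : Set.Ioi 0 ⊆ Function.support fun t ↦ ellipsoidWeight μ ζ ξ t * h t :=
    fun t ht ↦ (hprod t ht).ne'
  rw [Set.inter_eq_right.2 hsupport, volume_Ioi]
  exact ENNReal.zero_lt_top

lemma tendsto_ellipsoidWeight_mul_atTop (hμ : 0 < μ) (hζ : 0 < ζ) (hξ : 0 < ξ) {k : ℝ → ℝ} {C : ℝ}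
    (hk : ∀ t, 0 ≤ t → |k t| ≤ C * t) :
    Tendsto (fun t ↦ ellipsoidWeight μ ζ ξ t * k t) atTop (𝓝 0) := by
  obtain ⟨D, hD, hweight⟩ := exists_ellipsoidWeight_le hμ hζ hξ
  have hC : 0 ≤ C := by simpa using (abs_nonneg _).trans (hk 1 zero_le_one)
  have hlim : Tendsto (fun t : ℝ ↦ D * C * (1 + t) ^ (-(1 / 2) : ℝ)) atTop (𝓝 0) := by
    simpa using ((tendsto_rpow_neg_atTop (y := 1 / 2) (by norm_num)).comp
      (tendsto_atTop_add_const_left atTop (1 : ℝ) tendsto_id)).const_mul (D * C)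
  refine squeeze_zero_norm' ?_ hlim
  filter_upwards [eventually_ge_atTop 0] with t ht
  rw [norm_mul, norm_of_nonneg (ellipsoidWeight_nonneg t), norm_eq_abs]
  calc ellipsoidWeight μ ζ ξ t * |k t| ≤ D * (1 + t) ^ (-(3 / 2) : ℝ) * (C * (1 + t)) :=
        mul_le_mul (hweight t ht) ((hk t ht).trans (by gcongr; linarith)) (abs_nonneg _)
          (by positivity)
    _ = D * C * ((1 + t) ^ (-(3 / 2) : ℝ) * (1 + t) ^ (1 : ℝ)) := by rw [rpow_one]; ring
    _ = D * C * (1 + t) ^ (-(1 / 2) : ℝ) := by rw [← rpow_add (by positivity)]; norm_num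

/-- Integration by parts: up to the weight, `h` is the derivative of `ellipsoidWeight μ ζ ξ * k`. -/
lemma integral_eq_zero_of_hasDerivAt (hμ : 0 < μ) (hζ : 0 < ζ) (hξ : 0 < ξ) {k k' h : ℝ → ℝ}
    (hk : ∀ t, 0 ≤ t → HasDerivAt k (k' t) t) (hk₀ : k 0 = 0) {C : ℝ}
    (hC : ∀ t, 0 ≤ t → |k' t| ≤ C) (hh : Measurable h)
    (hhk : ∀ t, 0 < t → h t = k' t - 1 / 2 * k t * ((t + μ)⁻¹ + (t + ζ)⁻¹ + (t + ξ)⁻¹)) :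
    Integrable h (ellipsoidMeasure μ ζ ξ) ∧ ∫ t, h t ∂ellipsoidMeasure μ ζ ξ = 0 := by
  have hk_le : ∀ t, 0 ≤ t → |k t| ≤ C * t := fun t ht ↦ by
    simpa [hk₀, abs_of_nonneg ht] using (convex_Icc 0 t).norm_image_sub_le_of_norm_hasDerivWithin_le
      (fun s hs ↦ (hk s hs.1).hasDerivWithinAt) (fun s hs ↦ hC s hs.1)
      (Set.left_mem_Icc.2 ht) (Set.right_mem_Icc.2 ht)
  have hterm {a t : ℝ} (ha : 0 < a) (ht : 0 < t) : |k t * (t + a)⁻¹| ≤ C := by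
    have hC₀ : 0 ≤ C := (abs_nonneg _).trans (hC t ht.le)
    rw [abs_mul, abs_of_pos (inv_pos.2 (add_pos ht ha)), ← div_eq_mul_inv,
      div_le_iff₀ (by positivity)]
    nlinarith [hk_le t ht.le]
  have hint : Integrable h (ellipsoidMeasure μ ζ ξ) := by
    refine integrable_ellipsoidMeasure_of_bound hμ hζ hξ hh (C := C + 3 / 2 * C) fun t ht ↦ ?_
    have h₁ := abs_le.1 (hC t ht.le)
    have h₂ := abs_le.1 (hterm hμ ht)
    have h₃ := abs_le.1 (hterm hζ ht)
    have h₄ := abs_le.1 (hterm hξ ht)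
    rw [hhk t ht, abs_le]
    constructor <;> linarith
  refine ⟨hint, ?_⟩
  rw [integral_ellipsoidMeasure]
  have hderiv : ∀ t ∈ Set.Ici (0 : ℝ), HasDerivAt (fun t ↦ ellipsoidWeight μ ζ ξ t * k t)
      (ellipsoidWeight μ ζ ξ t *
        (k' t - 1 / 2 * k t * ((t + μ)⁻¹ + (t + ζ)⁻¹ + (t + ξ)⁻¹))) t := fun t ht ↦
    ((hasDerivAt_ellipsoidWeight hμ hζ hξ ht).mul (hk t ht)).congr_deriv (by ring)
  have hcongr : Set.EqOn (fun t ↦ ellipsoidWeight μ ζ ξ t * h t) (fun t ↦ ellipsoidWeight μ ζ ξ t *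
      (k' t - 1 / 2 * k t * ((t + μ)⁻¹ + (t + ζ)⁻¹ + (t + ξ)⁻¹))) (Set.Ioi 0) :=
    fun t ht ↦ by simp only [hhk t ht]
  rw [setIntegral_congr_fun measurableSet_Ioi hcongr, integral_Ioi_of_hasDerivAt_of_tendsto' hderiv
    ((integrable_ellipsoidMeasure_iff.1 hint).congr_fun hcongr measurableSet_Ioi)
    (tendsto_ellipsoidWeight_mul_atTop hμ hζ hξ hk_le), hk₀, mul_zero, sub_zero]

end EllipsoidMeasure

section Moments

variable {μ ζ ξ : ℝ}

/-- The decreasing function `μ / (t + μ)`, the polar (smallest axis) ingredient of the moments. -/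
noncomputable def polarRatio (μ t : ℝ) : ℝ := μ / (t + μ)

/-- The function `t / ((t + ζ)(t + ξ))`, the ingredient of the moments coming from the two axes
that span the plane of rotation. -/
noncomputable def planarRatio (ζ ξ t : ℝ) : ℝ := t / ((t + ζ) * (t + ξ))

/-- The moments `∫ planarRatio ^ i * polarRatio ^ j` of the ellipsoid measure. -/
noncomputable def ellipsoidMoment (μ ζ ξ : ℝ) (i j : ℕ) : ℝ :=
  ∫ t, planarRatio ζ ξ t ^ i * polarRatio μ t ^ j ∂ellipsoidMeasure μ ζ ξ

local notation "J" => ellipsoidMoment μ ζ ξ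

@[fun_prop]
lemma measurable_polarRatio : Measurable (polarRatio μ) := by unfold polarRatio; fun_prop

@[fun_prop]
lemma measurable_planarRatio : Measurable (planarRatio ζ ξ) := by unfold planarRatio; fun_prop

lemma polarRatio_pos (hμ : 0 < μ) {t : ℝ} (ht : 0 ≤ t) : 0 < polarRatio μ t := by
  unfold polarRatio; positivity

lemma polarRatio_le_one (hμ : 0 < μ) {t : ℝ} (ht : 0 ≤ t) : polarRatio μ t ≤ 1 := by
  rw [polarRatio, div_le_one (by positivity)]; linarith

lemma planarRatio_nonneg (hζ : 0 < ζ) (hξ : 0 < ξ) {t : ℝ} (ht : 0 ≤ t) :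
    0 ≤ planarRatio ζ ξ t := by
  unfold planarRatio; positivity

lemma planarRatio_pos (hζ : 0 < ζ) (hξ : 0 < ξ) {t : ℝ} (ht : 0 < t) : 0 < planarRatio ζ ξ t := by
  unfold planarRatio; positivity

lemma planarRatio_le (hζ : 0 < ζ) (hξ : 0 < ξ) {t : ℝ} (ht : 0 ≤ t) :
    planarRatio ζ ξ t ≤ (ζ + ξ + 2 * √(ζ * ξ))⁻¹ := by
  have hsq : √(ζ * ξ) ^ 2 = ζ * ξ := sq_sqrt (by positivity)
  rw [planarRatio, div_le_iff₀ (by positivity), inv_mul_eq_div, le_div_iff₀ (by positivity)]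
  nlinarith [sq_nonneg (t - √(ζ * ξ))]

lemma integrable_moment (hμ : 0 < μ) (hζ : 0 < ζ) (hξ : 0 < ξ) (i j : ℕ) :
    Integrable (fun t ↦ planarRatio ζ ξ t ^ i * polarRatio μ t ^ j) (ellipsoidMeasure μ ζ ξ) := by
  refine integrable_ellipsoidMeasure_of_bound hμ hζ hξ (by fun_prop)
    (C := (ζ + ξ + 2 * √(ζ * ξ))⁻¹ ^ i * 1 ^ j) fun t ht ↦ ?_
  have hρ := planarRatio_nonneg hζ hξ ht.le
  have hθ := (polarRatio_pos hμ ht.le).le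
  rw [abs_of_nonneg (by positivity)]
  gcongr
  · exact planarRatio_le hζ hξ ht.le
  · exact polarRatio_le_one hμ ht.le

lemma ellipsoidMoment_pos (hμ : 0 < μ) (hζ : 0 < ζ) (hξ : 0 < ξ) (i j : ℕ) : 0 < J i j := by
  refine integral_ellipsoidMeasure_pos hμ hζ hξ (integrable_moment hμ hζ hξ i j) fun t ht ↦ ?_
  have := planarRatio_pos hζ hξ ht
  have := polarRatio_pos hμ ht.le
  positivity

lemma integral_quadratic (hμ : 0 < μ) (hζ : 0 < ζ) (hξ : 0 < ξ) {h : ℝ → ℝ} {a b c d e f : ℝ}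
    (hh : ∀ t, 0 < t → h t = a + b * planarRatio ζ ξ t + c * polarRatio μ t +
      d * planarRatio ζ ξ t ^ 2 + e * (planarRatio ζ ξ t * polarRatio μ t) +
      f * polarRatio μ t ^ 2) :
    Integrable h (ellipsoidMeasure μ ζ ξ) ∧
      ∫ t, h t ∂ellipsoidMeasure μ ζ ξ =
        a * J 0 0 + b * J 1 0 + c * J 0 1 + d * J 2 0 + e * J 1 1 + f * J 0 2 := by
  have hint := fun i j (x : ℝ) ↦ (integrable_moment hμ hζ hξ i j).const_mul x
  have h₁ := (hint 0 0 a).add (hint 1 0 b)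
  have h₂ := h₁.add (hint 0 1 c)
  have h₃ := h₂.add (hint 2 0 d)
  have h₄ := h₃.add (hint 1 1 e)
  have h₅ := h₄.add (hint 0 2 f)
  have hcongr := (ae_pos_ellipsoidMeasure (μ := μ) (ζ := ζ) (ξ := ξ)).mono fun t ht ↦
    show a * (planarRatio ζ ξ t ^ 0 * polarRatio μ t ^ 0) +
      b * (planarRatio ζ ξ t ^ 1 * polarRatio μ t ^ 0) +
      c * (planarRatio ζ ξ t ^ 0 * polarRatio μ t ^ 1) +
      d * (planarRatio ζ ξ t ^ 2 * polarRatio μ t ^ 0) +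
      e * (planarRatio ζ ξ t ^ 1 * polarRatio μ t ^ 1) +
      f * (planarRatio ζ ξ t ^ 0 * polarRatio μ t ^ 2) = h t by rw [hh t ht]; ring
  refine ⟨h₅.congr hcongr, (integral_congr_ae hcongr).symm.trans ?_⟩
  refine (integral_add' h₄ (hint 0 2 f)).trans ?_
  rw [integral_add' h₃ (hint 1 1 e), integral_add' h₂ (hint 2 0 d), integral_add' h₁ (hint 0 1 c),
    integral_add' (hint 0 0 a) (hint 1 0 b)]
  simp only [integral_const_mul, ellipsoidMoment]

lemma moment_identity_of_linear (hμ : 0 < μ) (hζ : 0 < ζ) (hξ : 0 < ξ) :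
    J 0 0 - 3 * J 0 1 = 2 * (ζ - μ) * (ξ - μ) / μ * J 1 1 + (ζ + ξ - 2 * μ) * J 1 0 := by
  have hzero := integral_eq_zero_of_hasDerivAt hμ hζ hξ (k := fun t ↦ t) (k' := fun _ ↦ 1)
    (h := fun t ↦ 1 - 1 / 2 * t * ((t + μ)⁻¹ + (t + ζ)⁻¹ + (t + ξ)⁻¹))
    (fun t _ ↦ hasDerivAt_id t) rfl (C := 1) (by simp) (by fun_prop) (fun t _ ↦ rfl)
  have hexpand := integral_quadratic hμ hζ hξ
    (h := fun t ↦ 1 - 1 / 2 * t * ((t + μ)⁻¹ + (t + ζ)⁻¹ + (t + ξ)⁻¹))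
    (a := -(1 / 2)) (b := (ζ + ξ - 2 * μ) / 2) (c := 3 / 2) (d := 0)
    (e := (ζ - μ) * (ξ - μ) / μ) (f := 0) fun t ht ↦ by
      unfold polarRatio planarRatio
      field_simp
      ring
  linear_combination 2 * hexpand.2 - 2 * hzero.2

lemma moment_identity_of_polarRatio (hμ : 0 < μ) (hζ : 0 < ζ) (hξ : 0 < ξ) :
    3 * J 0 2 = J 0 1 + 2 * μ * J 1 0 + (ζ + ξ - 2 * μ) * J 1 1 := by
  have hzero := integral_eq_zero_of_hasDerivAt hμ hζ hξ (k := fun t ↦ μ * t / (t + μ))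
    (k' := fun t ↦ polarRatio μ t ^ 2)
    (h := fun t ↦ polarRatio μ t ^ 2
      - 1 / 2 * (μ * t / (t + μ)) * ((t + μ)⁻¹ + (t + ζ)⁻¹ + (t + ξ)⁻¹))
    (fun t ht ↦ (((hasDerivAt_id t).const_mul μ).div ((hasDerivAt_id t).add_const μ)
      (by positivity)).congr_deriv (by simp [polarRatio]; field_simp; ring))
    (by simp) (C := 1)
    (fun t ht ↦ by
      rw [abs_of_nonneg (sq_nonneg _)]
      exact pow_le_one₀ (polarRatio_pos hμ ht).le (polarRatio_le_one hμ ht))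
    (by fun_prop) (fun t _ ↦ rfl)
  have hexpand := integral_quadratic hμ hζ hξ
    (h := fun t ↦ polarRatio μ t ^ 2
      - 1 / 2 * (μ * t / (t + μ)) * ((t + μ)⁻¹ + (t + ζ)⁻¹ + (t + ξ)⁻¹))
    (a := 0) (b := -μ) (c := -(1 / 2)) (d := 0) (e := -((ζ + ξ - 2 * μ) / 2)) (f := 3 / 2)
    fun t ht ↦ by
      unfold polarRatio planarRatio
      field_simp
      ring
  linear_combination -2 * hexpand.2 + 2 * hzero.2

lemma integral_eq_zero_of_div_mul_div (hμ : 0 < μ) (hζ : 0 < ζ) (hξ : 0 < ξ) :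
    Integrable (fun t ↦ μ / (t + μ) ^ 2 * (t / (t + ξ)) + t / (t + μ) * (ξ / (t + ξ) ^ 2)
        - 1 / 2 * (t / (t + μ) * (t / (t + ξ))) * ((t + μ)⁻¹ + (t + ζ)⁻¹ + (t + ξ)⁻¹))
      (ellipsoidMeasure μ ζ ξ) ∧
    ∫ t, (μ / (t + μ) ^ 2 * (t / (t + ξ)) + t / (t + μ) * (ξ / (t + ξ) ^ 2)
        - 1 / 2 * (t / (t + μ) * (t / (t + ξ))) * ((t + μ)⁻¹ + (t + ζ)⁻¹ + (t + ξ)⁻¹))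
      ∂ellipsoidMeasure μ ζ ξ = 0 := by
  have hfrac {a t : ℝ} (ha : 0 < a) (ht : 0 ≤ t) : t / (t + a) ≤ 1 := by
    rw [div_le_one (by positivity)]; linarith
  have hfrac_deriv {a t : ℝ} (ha : 0 < a) (ht : 0 ≤ t) :
      HasDerivAt (fun t ↦ t / (t + a)) (a / (t + a) ^ 2) t :=
    ((hasDerivAt_id t).div ((hasDerivAt_id t).add_const a) (by positivity)).congr_deriv (by simp)
  have hderiv_le {a t : ℝ} (ha : 0 < a) (ht : 0 ≤ t) : a / (t + a) ^ 2 ≤ a⁻¹ := by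
    rw [div_le_iff₀ (by positivity), inv_mul_eq_div, le_div_iff₀ ha]; nlinarith
  refine integral_eq_zero_of_hasDerivAt hμ hζ hξ (C := μ⁻¹ + ξ⁻¹)
    (fun t ht ↦ (hfrac_deriv hμ ht).mul (hfrac_deriv hξ ht)) (by simp) (fun t ht ↦ ?_)
    (by fun_prop) (fun t _ ↦ rfl)
  rw [abs_of_nonneg (by positivity)]
  calc _ ≤ μ⁻¹ * 1 + 1 * ξ⁻¹ := by
        gcongr
        exacts [hderiv_le hμ ht, hfrac hξ ht, hfrac hμ ht, hderiv_le hξ ht]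
    _ = μ⁻¹ + ξ⁻¹ := by ring

lemma moment_one_one_le_moment_one_zero (hμ : 0 < μ) (hμζ : μ ≤ ζ) (hζξ : ζ ≤ ξ) :
    (6 * μ + ζ) * J 1 1 ≤ 3 * μ * J 1 0 := by
  have hζ := hμ.trans_le hμζ
  have hξ := hζ.trans_le hζξ
  obtain ⟨hint, hzero⟩ := integral_eq_zero_of_div_mul_div hμ hζ hξ
  obtain ⟨hlower_int, hlower⟩ := integral_quadratic hμ hζ hξ
    (h := fun t ↦ -(3 / 2) * planarRatio ζ ξ t
      + (3 + ζ / (2 * μ)) * (planarRatio ζ ξ t * polarRatio μ t))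
    (a := 0) (b := -(3 / 2)) (c := 0) (d := 0) (e := 3 + ζ / (2 * μ)) (f := 0) fun t _ ↦ by ring
  have hle := integral_mono_ae hlower_int hint (ae_pos_ellipsoidMeasure.mono fun t ht ↦ ?_)
  · rw [hzero, hlower] at hle
    have : (6 * μ + ζ) * J 1 1 = 2 * μ * ((3 + ζ / (2 * μ)) * J 1 1) := by field_simp; ring
    nlinarith
  · have hgap : 0 ≤ 3 / 2 * t / ((t + μ) * (t + ζ) * (t + ξ)) *
        (μ * (ζ - μ) / (t + μ) + t * (ξ - ζ) / (t + ξ)) := by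
      have := sub_nonneg.2 hμζ
      have := sub_nonneg.2 hζξ
      positivity
    refine sub_nonneg.1 (hgap.trans_eq ?_)
    unfold planarRatio polarRatio
    field_simp
    ring

lemma add_mul_le_sqrt (hζ : 0 < ζ) {r t : ℝ} (ht : 0 ≤ t) :
    t + r * ζ ≤ √((t + ζ * r ^ 2) * (t + ζ)) :=
  le_sqrt_of_sq_le (by nlinarith [mul_nonneg (mul_nonneg ht hζ.le) (sq_nonneg (r - 1))])

lemma deriv_geometricMean_identity {r t s : ℝ} (hr : 0 < r) (hζ : 0 < ζ) (ht : 0 < t)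
    (hs : 0 < s) (hst : s ^ 2 = (t + ζ * r ^ 2) * (t + ζ)) :
    1 - (1 * (t + ζ) + (t + ζ * r ^ 2) * 1) / (2 * s)
        - 1 / 2 * (t + r * ζ - s) * ((t + ζ * r ^ 2)⁻¹ + (t + ζ)⁻¹ + (t + ξ)⁻¹) =
      ζ * (1 - r) ^ 2 / 2 * ((t - r * ζ) / ((t + ζ * r ^ 2) * (t + ζ)))
        + 1 / 2 * (s - (t + r * ζ)) * (t + ξ)⁻¹ := by
  have hinv : (t + ζ * r ^ 2)⁻¹ + (t + ζ)⁻¹ = (2 * t + ζ * r ^ 2 + ζ) / s ^ 2 := by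
    rw [hst]; field_simp; ring
  have hnum : ζ * (1 - r) ^ 2 / 2 * (t - r * ζ) =
      s ^ 2 - 1 / 2 * (t + r * ζ) * (2 * t + ζ * r ^ 2 + ζ) := by rw [hst]; ring
  rw [hinv, ← mul_div_assoc, hnum, ← hst]
  field_simp
  ring

lemma integral_eq_zero_of_sub_geometricMean {r : ℝ} (hr : 0 < r) (hr₁ : r ≤ 1) (hζ : 0 < ζ)
    (hξ : 0 < ξ) (hμ : μ = ζ * r ^ 2) :
    Integrable (fun t ↦ 1 - (1 * (t + ζ) + (t + μ) * 1) / (2 * √((t + μ) * (t + ζ)))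
        - 1 / 2 * (t + r * ζ - √((t + μ) * (t + ζ))) * ((t + μ)⁻¹ + (t + ζ)⁻¹ + (t + ξ)⁻¹))
      (ellipsoidMeasure μ ζ ξ) ∧
    ∫ t, (1 - (1 * (t + ζ) + (t + μ) * 1) / (2 * √((t + μ) * (t + ζ)))
        - 1 / 2 * (t + r * ζ - √((t + μ) * (t + ζ))) * ((t + μ)⁻¹ + (t + ζ)⁻¹ + (t + ξ)⁻¹))
      ∂ellipsoidMeasure μ ζ ξ = 0 := by
  have hμ₀ : 0 < μ := by rw [hμ]; positivity
  have hderiv_le {t : ℝ} (ht : 0 ≤ t) :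
      (1 * (t + ζ) + (t + μ) * 1) / (2 * √((t + μ) * (t + ζ))) ≤ r⁻¹ := by
    rw [div_le_iff₀ (by positivity), inv_mul_eq_div, le_div_iff₀ hr, hμ]
    nlinarith [add_mul_le_sqrt hζ ht (r := r), mul_pos hr hζ, mul_pos hζ (pow_pos hr 2)]
  refine integral_eq_zero_of_hasDerivAt hμ₀ hζ hξ (C := 1 + r⁻¹)
    (fun t ht ↦ ((hasDerivAt_id t).add_const _).sub ((((hasDerivAt_id t).add_const μ).mul
      ((hasDerivAt_id t).add_const ζ)).sqrt (mul_pos (add_pos_of_nonneg_of_pos ht hμ₀)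
        (add_pos_of_nonneg_of_pos ht hζ)).ne')) ?_ (fun t ht ↦ (abs_sub _ _).trans ?_)
    (by fun_prop) (fun t _ ↦ rfl)
  · simp only [id, Pi.sub_apply, Pi.mul_apply, zero_add, hμ]
    rw [show ζ * r ^ 2 * ζ = (r * ζ) ^ 2 by ring, sqrt_sq (by positivity), sub_self]
  · rw [abs_one, abs_of_nonneg (by positivity)]
    exact add_le_add_right (hderiv_le ht) 1

lemma moment_zero_one_lower_bound {r : ℝ} (hr : 0 < r) (hr₁ : r < 1) (hζ : 0 < ζ) (hζξ : ζ ≤ ξ)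
    (hμ : μ = ζ * r ^ 2) : (1 + r) * (μ * J 1 0 + (ξ - μ) * J 1 1) ≤ r * J 0 1 := by
  have hξ := hζ.trans_le hζξ
  have hμ₀ : 0 < μ := by rw [hμ]; positivity
  obtain ⟨hint, hzero⟩ := integral_eq_zero_of_sub_geometricMean hr hr₁.le hζ hξ hμ
  obtain ⟨hlower_int, hlower⟩ := integral_quadratic hμ₀ hζ hξ
    (h := fun t ↦ ζ * (1 - r) ^ 2 / 2 * ((t - r * ζ) / ((t + μ) * (t + ζ))))
    (a := 0) (b := ζ * (1 - r) ^ 2 / 2 * (1 + r)) (c := ζ * (1 - r) ^ 2 / 2 * (-r / μ)) (d := 0)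
    (e := ζ * (1 - r) ^ 2 / 2 * ((1 + r) * (ξ / μ - 1))) (f := 0) fun t ht ↦ by
      unfold polarRatio planarRatio
      field_simp
      rw [hμ]
      ring
  have hle := integral_mono_ae hlower_int hint (ae_pos_ellipsoidMeasure.mono fun t ht ↦ ?_)
  · have hc : 0 < ζ * (1 - r) ^ 2 / (2 * μ) := by have := sub_pos.2 hr₁; positivity
    rw [hzero, hlower] at hle
    refine sub_nonpos.1 (nonpos_of_mul_nonpos_right (hle.trans_eq' ?_) hc)
    field_simp
    ring
  · have hs : √((t + μ) * (t + ζ)) ^ 2 = (t + μ) * (t + ζ) := sq_sqrt (by positivity)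
    have hgap := add_mul_le_sqrt hζ ht.le (r := r)
    subst hμ
    refine le_of_le_of_eq (le_add_of_nonneg_right ?_)
      (deriv_geometricMean_identity hr hζ ht (by positivity) hs).symm
    have := sub_nonneg.2 hgap
    positivity

end Moments

section SecondVariation

lemma cubic_bound_at_one {r s : ℝ} (hr : 0 ≤ r) (hr₁ : r ≤ 1) (hs : 2 * r ^ 2 + 1 / 3 ≤ s) :
    r * (1 - r ^ 2) * (2 * s + 3 * r ^ 2) < (2 - r) * s ^ 2 := by
  obtain ⟨y, hy, rfl⟩ : ∃ y, 0 ≤ y ∧ s = 2 * r ^ 2 + 1 / 3 + y :=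
    ⟨_, sub_nonneg.2 hs, (add_sub_cancel _ _).symm⟩
  have hconst : 0 < (2 - r) * (2 * r ^ 2 + 1 / 3) ^ 2 - r * (1 - r ^ 2) * (7 * r ^ 2 + 2 / 3) := by
    nlinarith [mul_nonneg hr (sub_nonneg.2 hr₁), sq_nonneg (r - 1 / 3), sq_nonneg (r ^ 2 - r / 3),
      sq_nonneg (r ^ 2 - 1 / 9), mul_nonneg hr (sq_nonneg (r - 1 / 3)),
      mul_nonneg hr (sq_nonneg (r ^ 2 - r / 3)), mul_nonneg hr (sq_nonneg (r ^ 2 - 1 / 9)),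
      pow_nonneg hr 3, pow_nonneg hr 5, mul_nonneg (pow_nonneg hr 4) (sub_nonneg.2 hr₁)]
  have hlin : 0 ≤ 4 / 3 - 8 / 3 * r + 8 * r ^ 2 - 2 * r ^ 3 := by
    nlinarith [mul_nonneg (sq_nonneg r) (sub_nonneg.2 hr₁), sq_nonneg (r - 1 / 3)]
  have hquad : 0 ≤ (2 - r) * y ^ 2 := mul_nonneg (by linarith) (sq_nonneg y)
  nlinarith [mul_nonneg hlin hy]

lemma cubic_bound_at_zero {r s : ℝ} (hr : 0 ≤ r) (hr₁ : r ≤ 1) (hs : 2 * r ^ 2 + 1 / 3 ≤ s) :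
    r * (2 - 2 * r ^ 2 + s) * (2 * s + 3 * r ^ 2) < (4 + r) * s ^ 2 := by
  obtain ⟨y, hy, rfl⟩ : ∃ y, 0 ≤ y ∧ s = 2 * r ^ 2 + 1 / 3 + y :=
    ⟨_, sub_nonneg.2 hs, (add_sub_cancel _ _).symm⟩
  have hconst : 0 < (4 - r) * (2 * r ^ 2 + 1 / 3) ^ 2 - 4 * r * (1 - r ^ 2) * (2 * r ^ 2 + 1 / 3)
      - 6 * r ^ 3 * (1 - r ^ 2) - 3 * r ^ 3 * (2 * r ^ 2 + 1 / 3) := by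
    nlinarith [mul_nonneg hr (sub_nonneg.2 hr₁), sq_nonneg (r - 1 / 3), sq_nonneg (r ^ 2 - r / 3),
      sq_nonneg (r ^ 2 - 1 / 9), mul_nonneg hr (sq_nonneg (r - 1 / 3)),
      mul_nonneg hr (sq_nonneg (r ^ 2 - r / 3)), mul_nonneg hr (sq_nonneg (r ^ 2 - 1 / 9)),
      pow_nonneg hr 3, pow_nonneg hr 5, mul_nonneg (pow_nonneg hr 4) (sub_nonneg.2 hr₁)]
  have hlin : 0 ≤ 2 * (4 - r) * (2 * r ^ 2 + 1 / 3) - 4 * r * (1 - r ^ 2) - 3 * r ^ 3 := by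
    nlinarith [mul_nonneg (sq_nonneg r) (sub_nonneg.2 hr₁), sq_nonneg (r - 1 / 6)]
  have hquad : 0 ≤ (4 - r) * y ^ 2 := mul_nonneg (by linarith) (sq_nonneg y)
  nlinarith [mul_nonneg hlin hy]

-- Both sides are affine in `z`, so the two endpoint cases suffice.
lemma cubic_bound {r z s : ℝ} (hr : 0 ≤ r) (hr₁ : r ≤ 1) (hz : 0 ≤ z) (hz₁ : z ≤ 1)
    (hs : 2 * r ^ 2 + 1 / 3 ≤ s) :
    r * (2 - r ^ 2 * (1 + z) + (1 + z - 2 * z * r ^ 2) * (s - r ^ 2)) * (6 * s + 9 * r ^ 2) <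
      (12 * (1 + r) * (1 + z * (s - r ^ 2)) - 9 * r * (1 + z + 2 * z * (s - r ^ 2))) * s ^ 2 := by
  have hone := mul_pos (show 0 < 6 * (1 + (s - r ^ 2)) by nlinarith [sq_nonneg r])
    (sub_pos.2 (cubic_bound_at_one hr hr₁ hs))
  have hzero := sub_pos.2 (cubic_bound_at_zero hr hr₁ hs)
  have hconvex : 0 < (1 - z) * (3 * ((4 + r) * s ^ 2 -
        r * (2 - 2 * r ^ 2 + s) * (2 * s + 3 * r ^ 2))) +
      z * (6 * (1 + (s - r ^ 2)) * ((2 - r) * s ^ 2 -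
        r * (1 - r ^ 2) * (2 * s + 3 * r ^ 2))) := by
    rcases hz.eq_or_lt with rfl | hz
    · linarith
    · have := mul_pos hz hone
      have := mul_nonneg (sub_nonneg.2 hz₁) hzero.le
      linarith
  linear_combination hconvex

lemma scaleVar_bound_of_moment_bounds {μ ζ ξ r A B T : ℝ} (hζ : 0 < ζ) (hζ₁ : ζ ≤ 1)
    (hζξ : ζ * ξ = 1) (hr : 0 < r) (hr₁ : r ≤ 1) (hμ : μ = ζ * r ^ 2) (hB : 0 < B)
    (hBA : (6 * μ + ζ) * B ≤ 3 * μ * A) (hT : (1 + r) * (μ * A + (ξ - μ) * B) ≤ r * T) :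
    (2 * (ζ - μ) * (ξ - μ) / μ * B + (ζ + ξ - 2 * μ) * A) * B * (6 * A + 9 * B) <
      (12 * T - 9 * (2 * μ * A + (ζ + ξ - 2 * μ) * B)) * A ^ 2 := by
  obtain ⟨s, rfl⟩ : ∃ s, A = s / r ^ 2 * B := ⟨A / B * r ^ 2, by field_simp⟩
  obtain rfl : ξ = ζ⁻¹ := eq_inv_of_mul_eq_one_right hζξ
  subst hμ
  have hs : 2 * r ^ 2 + 1 / 3 ≤ s := by
    have : ζ * B * (6 * r ^ 2 + 1) ≤ ζ * B * (3 * s) := by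
      convert hBA using 1
      · ring
      · field_simp
    linarith [le_of_mul_le_mul_left this (by positivity)]
  have hcubic := mul_lt_mul_of_pos_left
    (cubic_bound hr.le hr₁ (sq_nonneg ζ) (pow_le_one₀ hζ.le hζ₁) hs)
    (show 0 < B ^ 3 / (ζ * r ^ 4) by positivity)
  refine lt_of_mul_lt_mul_left ?_ hr.le
  have hTs := mul_le_mul_of_nonneg_right hT (sq_nonneg (s / r ^ 2 * B))
  calc _ = B ^ 3 / (ζ * r ^ 4) * _ := by field_simp; ring
    _ < _ := hcubic
    _ = 12 * ((1 + r) * (ζ * r ^ 2 * (s / r ^ 2 * B) + (ζ⁻¹ - ζ * r ^ 2) * B) *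
          (s / r ^ 2 * B) ^ 2) - 9 * r * (2 * (ζ * r ^ 2) * (s / r ^ 2 * B) +
          (ζ + ζ⁻¹ - 2 * (ζ * r ^ 2)) * B) * (s / r ^ 2 * B) ^ 2 := by field_simp; ring
    _ ≤ _ := by linarith

/-- The rotational energy of the equilibrium, in the units of `normalizedEnergy`; it balances the
derivative of the gravitational energy in the scale direction. -/
noncomputable def spinEnergy (μ ζ ξ : ℝ) : ℝ :=
  (ellipsoidMoment μ ζ ξ 0 0 - 3 * ellipsoidMoment μ ζ ξ 0 1) / 2

/-- Minus the derivative of the gravitational energy with respect to `ζ + ξ`. -/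
noncomputable def shapeForce (μ ζ ξ : ℝ) : ℝ := ellipsoidMoment μ ζ ξ 1 0 / 2

/-- The mixed coefficient of the second variation of the planar energy. -/
noncomputable def mixedVar (μ ζ ξ : ℝ) : ℝ :=
  ellipsoidMoment μ ζ ξ 1 0 / 4 + 3 / 4 * ellipsoidMoment μ ζ ξ 1 1

/-- The coefficient of the second variation of the planar energy in the scale direction. -/
noncomputable def scaleVar (μ ζ ξ : ℝ) : ℝ :=
  ellipsoidMoment μ ζ ξ 0 0 / 4 + 9 / 2 * ellipsoidMoment μ ζ ξ 0 1
    - 27 / 4 * ellipsoidMoment μ ζ ξ 0 2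

/-- The gravitational contribution to the second variation in the direction of `ζ + ξ`. -/
noncomputable def shapeVar (μ ζ ξ : ℝ) : ℝ := 3 / 4 * ellipsoidMoment μ ζ ξ 2 0

/-- The coefficient of the second variation in the direction of `ζ + ξ`. -/
noncomputable def shapeStiffness (μ ζ ξ : ℝ) : ℝ :=
  2 * (2 * (ζ + ξ) * shapeForce μ ζ ξ - spinEnergy μ ζ ξ) / ((ζ + ξ - 2) * (ζ + ξ + 2))
    - shapeVar μ ζ ξ

variable {μ ζ ξ : ℝ}

lemma shapeForce_pos (hμ : 0 < μ) (hζ : 0 < ζ) (hξ : 0 < ξ) : 0 < shapeForce μ ζ ξ :=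
  half_pos (ellipsoidMoment_pos hμ hζ hξ 1 0)

lemma spinEnergy_pos (hμ : 0 < μ) (hμζ : μ < ζ) (hμξ : μ < ξ) : 0 < spinEnergy μ ζ ξ := by
  have hζ := hμ.trans hμζ
  have hξ := hμ.trans hμξ
  have := ellipsoidMoment_pos hμ hζ hξ 1 0
  have := ellipsoidMoment_pos hμ hζ hξ 1 1
  have := sub_pos.2 hμζ
  have := sub_pos.2 hμξ
  have : 0 < ζ + ξ - 2 * μ := by linarith
  rw [spinEnergy, moment_identity_of_linear hμ hζ hξ]
  positivity

lemma sub_two_mul_shapeForce_lt_spinEnergy (hμ : 0 < μ) (hμζ : μ < ζ) (hζ₁ : ζ < 1)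
    (hζξ : ζ * ξ = 1) : (ζ + ξ - 2) * shapeForce μ ζ ξ < spinEnergy μ ζ ξ := by
  have hζ := hμ.trans hμζ
  have hξ : 1 < ξ := by nlinarith
  have hJ₁₀ := ellipsoidMoment_pos hμ hζ (one_pos.trans hξ) 1 0
  have hJ₁₁ := ellipsoidMoment_pos hμ hζ (one_pos.trans hξ) 1 1
  have hdiff : spinEnergy μ ζ ξ - (ζ + ξ - 2) * shapeForce μ ζ ξ =
      (ζ - μ) * (ξ - μ) / μ * ellipsoidMoment μ ζ ξ 1 1 +
        (1 - μ) * ellipsoidMoment μ ζ ξ 1 0 := by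
    rw [shapeForce, spinEnergy, moment_identity_of_linear hμ hζ (one_pos.trans hξ)]
    ring
  have := sub_pos.2 hμζ
  have : 0 < ξ - μ := by linarith
  have : 0 < 1 - μ := by linarith
  rw [← sub_pos, hdiff]
  positivity

lemma shapeVar_le (hμ : 0 < μ) (hζ : 0 < ζ) (hξ : 0 < ξ) :
    shapeVar μ ζ ξ ≤ 3 / 2 * (ζ + ξ + 2 * √(ζ * ξ))⁻¹ * shapeForce μ ζ ξ := by
  have hle : ellipsoidMoment μ ζ ξ 2 0 ≤
      (ζ + ξ + 2 * √(ζ * ξ))⁻¹ * ellipsoidMoment μ ζ ξ 1 0 := by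
    rw [ellipsoidMoment, ellipsoidMoment, ← integral_const_mul]
    refine integral_mono_ae (integrable_moment hμ hζ hξ 2 0)
      ((integrable_moment hμ hζ hξ 1 0).const_mul _) (ae_pos_ellipsoidMeasure.mono fun t ht ↦ ?_)
    have := planarRatio_nonneg hζ hξ ht.le
    simp only [pow_zero, mul_one, pow_one, sq]
    gcongr
    exact planarRatio_le hζ hξ ht.le
  rw [shapeVar, shapeForce]
  linarith

lemma spinEnergy_mul_mixedVar_sq_lt (hμ : 0 < μ) (hμζ : μ < ζ) (hζ₁ : ζ < 1) (hζξ : ζ * ξ = 1) :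
    2 * spinEnergy μ ζ ξ * mixedVar μ ζ ξ ^ 2 < scaleVar μ ζ ξ * shapeForce μ ζ ξ ^ 2 := by
  have hζ := hμ.trans hμζ
  have hξ : 1 < ξ := by nlinarith
  have hξ₀ : 0 < ξ := one_pos.trans hξ
  have hζ_le_ξ : ζ ≤ ξ := (hζ₁.trans hξ).le
  have hr : 0 < √(μ / ζ) := by positivity
  have hr₁ : √(μ / ζ) < 1 := by
    rw [sqrt_lt' one_pos, one_pow, div_lt_one hζ]; exact hμζ
  have hμr : μ = ζ * √(μ / ζ) ^ 2 := by rw [sq_sqrt (by positivity)]; field_simp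
  have hbound := scaleVar_bound_of_moment_bounds hζ hζ₁.le hζξ hr hr₁.le hμr
    (ellipsoidMoment_pos hμ hζ hξ₀ 1 1) (moment_one_one_le_moment_one_zero hμ hμζ.le hζ_le_ξ)
    (moment_zero_one_lower_bound hr hr₁ hζ hζ_le_ξ hμr)
  have hM := moment_identity_of_linear hμ hζ hξ₀
  have hT := moment_identity_of_polarRatio hμ hζ hξ₀
  have hT₂ : ellipsoidMoment μ ζ ξ 0 2 = (ellipsoidMoment μ ζ ξ 0 1 + 2 * μ *
      ellipsoidMoment μ ζ ξ 1 0 + (ζ + ξ - 2 * μ) * ellipsoidMoment μ ζ ξ 1 1) / 3 := by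
    linarith
  rw [← hM] at hbound
  unfold spinEnergy mixedVar scaleVar shapeForce
  rw [hT₂]
  linear_combination hbound / 16

lemma shapeStiffness_lower_bound (hμ : 0 < μ) (hμζ : μ < ζ) (hζ₁ : ζ < 1) (hζξ : ζ * ξ = 1)
    (hlo : (ζ + ξ - 2) * shapeForce μ ζ ξ ≤ spinEnergy μ ζ ξ)
    (hhi : spinEnergy μ ζ ξ ≤ (ζ + ξ + 2) * shapeForce μ ζ ξ) :
    shapeForce μ ζ ξ ^ 2 / (2 * spinEnergy μ ζ ξ) ≤ shapeStiffness μ ζ ξ := by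
  have hζ := hμ.trans hμζ
  have hξ : 1 < ξ := by nlinarith
  have hX := spinEnergy_pos hμ hμζ (hμζ.trans (hζ₁.trans hξ))
  have hG := shapeForce_pos hμ hζ (one_pos.trans hξ)
  have hZ := shapeVar_le hμ hζ (one_pos.trans hξ)
  rw [hζξ, sqrt_one, mul_one] at hZ
  have hp : 0 < ζ + ξ - 2 := by nlinarith [mul_pos (sub_pos.2 hζ₁) (sub_pos.2 hξ)]
  rw [shapeStiffness]
  set X := spinEnergy μ ζ ξ
  set G := shapeForce μ ζ ξ
  have hrot : 2 * G ^ 2 / X ≤ 2 * (2 * (ζ + ξ) * G - X) / ((ζ + ξ - 2) * (ζ + ξ + 2)) := by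
    rw [div_le_div_iff₀ hX (by positivity)]
    nlinarith [mul_nonneg (sub_nonneg.2 hlo) (sub_nonneg.2 hhi)]
  have hgrav : (ζ + ξ + 2)⁻¹ * G ≤ G ^ 2 / X := by
    rw [inv_mul_eq_div, div_le_div_iff₀ (by linarith) hX]
    nlinarith
  calc _ = 2 * G ^ 2 / X - 3 / 2 * (G ^ 2 / X) := by field_simp; ring
    _ ≤ _ := by linarith

lemma second_variation_posDef (hμ : 0 < μ) (hμζ : μ < ζ) (hζ₁ : ζ < 1) (hζξ : ζ * ξ = 1)
    (hlo : (ζ + ξ - 2) * shapeForce μ ζ ξ ≤ spinEnergy μ ζ ξ)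
    (hhi : spinEnergy μ ζ ξ ≤ (ζ + ξ + 2) * shapeForce μ ζ ξ) :
    0 < scaleVar μ ζ ξ ∧
      mixedVar μ ζ ξ ^ 2 < scaleVar μ ζ ξ * shapeStiffness μ ζ ξ := by
  have hξ : 1 < ξ := by nlinarith
  have hX := spinEnergy_pos hμ hμζ (hμζ.trans (hζ₁.trans hξ))
  have hkey := spinEnergy_mul_mixedVar_sq_lt hμ hμζ hζ₁ hζξ
  have hY : 0 < scaleVar μ ζ ξ :=
    pos_of_mul_pos_left (hkey.trans_le' (by positivity)) (sq_nonneg _)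
  refine ⟨hY, lt_of_lt_of_le ?_ (mul_le_mul_of_nonneg_left
    (shapeStiffness_lower_bound hμ hμζ hζ₁ hζξ hlo hhi) hY.le)⟩
  rw [← mul_div_assoc, lt_div_iff₀ (by positivity)]
  linarith

end SecondVariation

section Expansion

lemma isBigO_mul_of_continuousAt {E : Type*} [TopologicalSpace E] {x : E} {f k : E → ℝ}
    {n : E → ℝ} (hf : f =O[𝓝 x] n) (hk : ContinuousAt k x) : (fun v ↦ f v * k v) =O[𝓝 x] n := by
  simpa using hf.mul (hk.isBigO_one ℝ)

-- With `s = √(1 + u)` and the Taylor polynomial `P`, `s⁻¹ - P = (1 - s²P²) / (s (1 + sP))`.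
lemma isBigO_inv_sqrt_one_add :
    (fun u : ℝ ↦ (√(1 + u))⁻¹ - (1 - u / 2 + 3 / 8 * u ^ 2)) =O[𝓝 0] fun u ↦ u ^ 3 := by
  have hcont : ContinuousAt (fun u : ℝ ↦ -(5 / 8 - 15 / 64 * u + 9 / 64 * u ^ 2) /
      (√(1 + u) * (1 + √(1 + u) * (1 - u / 2 + 3 / 8 * u ^ 2)))) 0 := by
    fun_prop (disch := norm_num)
  refine (isBigO_mul_of_continuousAt (isBigO_refl (fun u : ℝ ↦ u ^ 3) _) hcont).congr' ?_ .rfl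
  filter_upwards [eventually_gt_nhds (show (-1 : ℝ) < 0 by norm_num)] with u hu
  have hpos : 0 < 1 + u := by linarith
  have : 0 < √(1 + u) := sqrt_pos.2 hpos
  have : 0 < 1 - u / 2 + 3 / 8 * u ^ 2 := by nlinarith [sq_nonneg (u - 2 / 3)]
  have hconj (P : ℝ) : ((√(1 + u))⁻¹ - P) * (√(1 + u) * (1 + √(1 + u) * P)) =
      1 - √(1 + u) ^ 2 * P ^ 2 := by field_simp; ring
  rw [← mul_div_assoc, div_eq_iff (by positivity), hconj, sq_sqrt hpos.le]
  ring

lemma isBigO_fst : (fun v : ℝ × ℝ ↦ v.1) =O[𝓝 0] fun v ↦ ‖v‖ :=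
  isBigO_of_le _ fun v ↦ by simpa only [norm_norm] using norm_fst_le v

lemma isBigO_snd : (fun v : ℝ × ℝ ↦ v.2) =O[𝓝 0] fun v ↦ ‖v‖ :=
  isBigO_of_le _ fun v ↦ by simpa only [norm_norm] using norm_snd_le v

lemma isBigO_monomial (i j : ℕ) :
    (fun v : ℝ × ℝ ↦ v.1 ^ i * v.2 ^ j) =O[𝓝 0] fun v ↦ ‖v‖ ^ (i + j) := by
  simpa only [pow_add] using (isBigO_fst.pow i).mul (isBigO_snd.pow j)

lemma isBigO_inv_sqrt_mul_inv_sqrt :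
    (fun v : ℝ × ℝ ↦ (√(1 + v.1))⁻¹ * (√(1 + v.2))⁻¹ - (1 - v.1 / 2 - v.2 / 2
      + 3 / 8 * v.1 ^ 2 + 1 / 4 * (v.1 * v.2) + 3 / 8 * v.2 ^ 2)) =O[𝓝 0] fun v ↦ ‖v‖ ^ 3 := by
  have hfst := (isBigO_inv_sqrt_one_add.comp_tendsto
    (continuous_fst.tendsto' (0 : ℝ × ℝ) 0 rfl)).trans (isBigO_fst.pow 3)
  have hsnd := (isBigO_inv_sqrt_one_add.comp_tendsto
    (continuous_snd.tendsto' (0 : ℝ × ℝ) 0 rfl)).trans (isBigO_snd.pow 3)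
  refine (((isBigO_mul_of_continuousAt (k := fun v ↦ 1 - v.2 / 2 + 3 / 8 * v.2 ^ 2) hfst
    (by fun_prop)).add (isBigO_mul_of_continuousAt (k := fun v ↦ (√(1 + v.1))⁻¹) hsnd
    (by fun_prop (disch := simp)))).add ((isBigO_mul_of_continuousAt
    (k := fun v ↦ -(3 / 16) + 9 / 64 * v.1) (isBigO_monomial 1 2) (by fun_prop)).add
    (isBigO_mul_of_continuousAt (k := fun _ ↦ -(3 / 16)) (isBigO_monomial 2 1)
    (by fun_prop)))).congr_left fun v ↦ ?_
  simp only [Function.comp_apply]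
  ring

lemma isBigO_integral_of_bound {α E F : Type*} [MeasurableSpace α] {ν : Measure α}
    [IsFiniteMeasure ν] [SeminormedAddCommGroup E] [NormedAddCommGroup F] [NormedSpace ℝ F]
    {f : E → F} {n : ℕ} (hf : f =O[𝓝 0] fun v ↦ ‖v‖ ^ n) {T : α → E → E} {M : ℝ}
    (hT : ∀ᵐ a ∂ν, ∀ v, ‖T a v‖ ≤ M * ‖v‖) :
    (fun v ↦ ∫ a, f (T a v) ∂ν) =O[𝓝 0] fun v ↦ ‖v‖ ^ n := by
  obtain ⟨C, hC, hbound⟩ := hf.exists_nonneg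
  obtain ⟨r, hr, hball⟩ := Metric.eventually_nhds_iff_ball.1 hbound.bound
  refine IsBigO.of_bound (C * M ^ n * ν.real Set.univ) ?_
  have hsmall : Tendsto (fun v : E ↦ M * ‖v‖) (𝓝 0) (𝓝 0) :=
    (continuous_const.mul continuous_norm).tendsto' _ _ (by simp)
  filter_upwards [hsmall.eventually_lt_const hr] with v hv
  rw [norm_pow, norm_norm, mul_right_comm]
  refine norm_integral_le_of_norm_le_const (hT.mono fun a ha ↦ ?_)
  refine (hball _ (mem_ball_zero_iff.2 ((ha v).trans_lt hv))).trans ?_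
  rw [norm_pow, norm_norm, mul_assoc, ← mul_pow]
  gcongr
  exact ha v

variable {μ ζ ξ : ℝ}

/-- The total mass of the ellipsoid measure when `ζ + ξ` is increased by `v.1` at constant `ζ * ξ`
and `μ` is multiplied by `1 + v.2`, written as an integral over the unperturbed measure; see
`ellipsoidMoment_zero_zero_eq_perturbedMass`. -/
noncomputable def perturbedMass (μ ζ ξ : ℝ) (v : ℝ × ℝ) : ℝ :=
  ∫ t, (√(1 + v.1 * planarRatio ζ ξ t))⁻¹ * (√(1 + v.2 * polarRatio μ t))⁻¹ ∂ellipsoidMeasure μ ζ ξ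

lemma ellipsoidMoment_zero_zero_eq_perturbedMass (hμ : 0 < μ) (hζ : 0 < ζ) (hξ : 0 < ξ)
    {μ' ζ' ξ' : ℝ} (hμ' : 0 < μ') (hprod : ζ' * ξ' = ζ * ξ) :
    ellipsoidMoment μ' ζ' ξ' 0 0 = perturbedMass μ ζ ξ (ζ' + ξ' - (ζ + ξ), μ' / μ - 1) := by
  simp only [ellipsoidMoment, perturbedMass, pow_zero, mul_one, integral_ellipsoidMeasure]
  refine setIntegral_congr_fun measurableSet_Ioi fun t (ht : 0 < t) ↦ ?_
  have hplanar : 1 + (ζ' + ξ' - (ζ + ξ)) * planarRatio ζ ξ t =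
      (t + ζ') * (t + ξ') / ((t + ζ) * (t + ξ)) := by
    unfold planarRatio
    field_simp
    linear_combination -hprod
  have hpolar : 1 + (μ' / μ - 1) * polarRatio μ t = (t + μ') / (t + μ) := by
    unfold polarRatio
    field_simp
    ring
  have hsplit : (t + μ') * (t + ζ') * (t + ξ') = (t + μ) * (t + ζ) * (t + ξ) *
      ((t + ζ') * (t + ξ') / ((t + ζ) * (t + ξ))) * ((t + μ') / (t + μ)) := by field_simp
  simp only [ellipsoidWeight]
  rw [hplanar, hpolar, hsplit, sqrt_mul' _ (by positivity), sqrt_mul (by positivity), mul_inv,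
    mul_inv, mul_assoc]

lemma norm_perturbation_le (hμ : 0 < μ) (hζ : 0 < ζ) (hξ : 0 < ξ) {t : ℝ} (ht : 0 < t)
    (v : ℝ × ℝ) : ‖(v.1 * planarRatio ζ ξ t, v.2 * polarRatio μ t)‖ ≤
      max (ζ + ξ + 2 * √(ζ * ξ))⁻¹ 1 * ‖v‖ := by
  rw [Prod.norm_mk, norm_mul, norm_mul, mul_comm ‖v.1‖, mul_comm ‖v.2‖,
    norm_of_nonneg (planarRatio_nonneg hζ hξ ht.le), norm_of_nonneg (polarRatio_pos hμ ht.le).le]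
  refine max_le ?_ ?_
  · exact mul_le_mul (le_max_of_le_left (planarRatio_le hζ hξ ht.le)) (norm_fst_le v)
      (norm_nonneg _) (by positivity)
  · exact mul_le_mul (le_max_of_le_right (polarRatio_le_one hμ ht.le)) (norm_snd_le v)
      (norm_nonneg _) (by positivity)

lemma eventually_integrable_perturbation (hμ : 0 < μ) (hζ : 0 < ζ) (hξ : 0 < ξ) :
    ∀ᶠ v : ℝ × ℝ in 𝓝 0, Integrable (fun t ↦ (√(1 + v.1 * planarRatio ζ ξ t))⁻¹ *
      (√(1 + v.2 * polarRatio μ t))⁻¹) (ellipsoidMeasure μ ζ ξ) := by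
  have hsmall : Tendsto (fun v : ℝ × ℝ ↦ max (ζ + ξ + 2 * √(ζ * ξ))⁻¹ 1 * ‖v‖) (𝓝 0) (𝓝 0) :=
    (continuous_const.mul continuous_norm).tendsto' _ _ (by simp)
  filter_upwards [hsmall.eventually_lt_const (show (0 : ℝ) < 3 / 4 by norm_num)] with v hv
  refine integrable_ellipsoidMeasure_of_bound hμ hζ hξ (by fun_prop) (C := 2 * 2) fun t ht ↦ ?_
  have hbound {u : ℝ} (hu : ‖u‖ ≤ ‖(v.1 * planarRatio ζ ξ t, v.2 * polarRatio μ t)‖) :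
      (√(1 + u))⁻¹ ≤ 2 := by
    have := neg_le_of_abs_le (hu.trans (norm_perturbation_le hμ hζ hξ ht v))
    rw [inv_le_comm₀ (sqrt_pos.2 (by linarith)) two_pos]
    exact le_sqrt_of_sq_le (by linarith)
  rw [abs_of_nonneg (by positivity)]
  have h₁ := hbound (norm_fst_le (v.1 * planarRatio ζ ξ t, v.2 * polarRatio μ t))
  have h₂ := hbound (norm_snd_le (v.1 * planarRatio ζ ξ t, v.2 * polarRatio μ t))
  gcongr

lemma isBigO_perturbedMass (hμ : 0 < μ) (hζ : 0 < ζ) (hξ : 0 < ξ) :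
    (fun v ↦ perturbedMass μ ζ ξ v - (ellipsoidMoment μ ζ ξ 0 0
      - v.1 / 2 * ellipsoidMoment μ ζ ξ 1 0 - v.2 / 2 * ellipsoidMoment μ ζ ξ 0 1
      + 3 / 8 * v.1 ^ 2 * ellipsoidMoment μ ζ ξ 2 0
      + 1 / 4 * (v.1 * v.2) * ellipsoidMoment μ ζ ξ 1 1
      + 3 / 8 * v.2 ^ 2 * ellipsoidMoment μ ζ ξ 0 2)) =O[𝓝 0] fun v ↦ ‖v‖ ^ 3 := by
  have := isFiniteMeasure_ellipsoidMeasure hμ hζ hξ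
  refine (isBigO_integral_of_bound (ν := ellipsoidMeasure μ ζ ξ) isBigO_inv_sqrt_mul_inv_sqrt
    (ae_pos_ellipsoidMeasure.mono fun t ht ↦ norm_perturbation_le hμ hζ hξ ht)).congr' ?_ .rfl
  filter_upwards [eventually_integrable_perturbation hμ hζ hξ] with v hv
  obtain ⟨hint, hexpand⟩ := integral_quadratic hμ hζ hξ (a := 1) (b := -(v.1 / 2))
    (c := -(v.2 / 2)) (d := 3 / 8 * v.1 ^ 2) (e := 1 / 4 * (v.1 * v.2)) (f := 3 / 8 * v.2 ^ 2)
    (h := fun t ↦ 1 - v.1 * planarRatio ζ ξ t / 2 - v.2 * polarRatio μ t / 2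
      + 3 / 8 * (v.1 * planarRatio ζ ξ t) ^ 2
      + 1 / 4 * (v.1 * planarRatio ζ ξ t * (v.2 * polarRatio μ t))
      + 3 / 8 * (v.2 * polarRatio μ t) ^ 2) fun t _ ↦ by ring
  rw [integral_sub hv hint, hexpand, perturbedMass]
  ring

end Expansion

section StrictMinimum

lemma eventually_lt_of_isLittleO {E : Type*} [NormedAddCommGroup E] {f q : E → ℝ} {c : ℝ}
    (hc : 0 < c) (hq : ∀ v, c * ‖v‖ ^ 2 ≤ q v)
    (hf : (fun v ↦ f v - f 0 - q v) =o[𝓝 0] fun v ↦ ‖v‖ ^ 2) :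
    ∀ᶠ v in 𝓝 0, v ≠ 0 → f 0 < f v := by
  filter_upwards [hf.bound (half_pos hc)] with v hv hv₀
  have hpos : 0 < ‖v‖ ^ 2 := by positivity
  rw [norm_of_nonneg hpos.le] at hv
  linarith [hq v, neg_le_of_abs_le hv, mul_pos hc hpos]

lemma exists_pos_mul_norm_sq_le {a b c : ℝ} (hc : 0 < c) (hdisc : b ^ 2 < a * c) :
    ∃ k > 0, ∀ v : ℝ × ℝ, k * ‖v‖ ^ 2 ≤ a * v.1 ^ 2 + 2 * b * (v.1 * v.2) + c * v.2 ^ 2 := by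
  have ha : 0 < a := pos_of_mul_pos_left (hdisc.trans_le' (sq_nonneg b)) hc.le
  refine ⟨(a * c - b ^ 2) / (a + c), div_pos (sub_pos.2 hdisc) (by positivity), fun v ↦ ?_⟩
  have hnorm : ‖v‖ ^ 2 ≤ v.1 ^ 2 + v.2 ^ 2 := by
    rw [Prod.norm_def]
    rcases max_choice ‖v.1‖ ‖v.2‖ with h | h <;> rw [h, norm_eq_abs, sq_abs]
    · linarith [sq_nonneg v.2]
    · linarith [sq_nonneg v.1]
  rw [div_mul_eq_mul_div, div_le_iff₀ (by positivity)]
  have := mul_le_mul_of_nonneg_left hnorm (sub_pos.2 hdisc).le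
  nlinarith [sq_nonneg (a * v.1 + b * v.2), sq_nonneg (b * v.1 + c * v.2)]

variable {μ ζ ξ : ℝ}

/-- The rotational energy at constant circulation and angular momentum when `ζ + ξ` is increased
by `δ` at constant volume and constant `μ`, in units where it equals `spinEnergy μ ζ ξ` at `0`. -/
noncomputable def centrifugalEnergy (μ ζ ξ δ : ℝ) : ℝ :=
  ((ζ + ξ - 2) ^ 2 / (ζ + ξ - 2 + δ) * ((ζ + ξ + 2) * shapeForce μ ζ ξ - spinEnergy μ ζ ξ) +
    (ζ + ξ + 2) ^ 2 / (ζ + ξ + 2 + δ) * (spinEnergy μ ζ ξ - (ζ + ξ - 2) * shapeForce μ ζ ξ)) / 4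

/-- The planar energy, relative to an equilibrium and up to a constant factor: `v.1` is the
increment of `ζ + ξ`, and `μ` is multiplied by `(1 + v.2) ^ 6`. -/
noncomputable def normalizedEnergy (μ ζ ξ : ℝ) (v : ℝ × ℝ) : ℝ :=
  (1 + v.2) ^ 2 * centrifugalEnergy μ ζ ξ v.1
    - (1 + v.2) * perturbedMass μ ζ ξ (v.1, (1 + v.2) ^ 6 - 1)

lemma isBigO_sq_div_add {p : ℝ} (hp : p ≠ 0) :
    (fun δ ↦ p ^ 2 / (p + δ) - (p - δ + δ ^ 2 / p)) =O[𝓝 0] fun δ ↦ δ ^ 3 := by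
  have hcont : ContinuousAt (fun δ ↦ -(1 / (p * (p + δ)))) 0 := by
    fun_prop (disch := simpa using hp)
  refine (isBigO_mul_of_continuousAt (isBigO_refl (fun δ : ℝ ↦ δ ^ 3) _) hcont).congr' ?_ .rfl
  have hne : ∀ᶠ δ in 𝓝 (0 : ℝ), p + δ ≠ 0 :=
    ContinuousAt.eventually_ne (by fun_prop) (by simpa using hp)
  filter_upwards [hne] with δ hδ
  field_simp
  ring

lemma isBigO_centrifugalEnergy (hm : ζ + ξ - 2 ≠ 0) (hp : ζ + ξ + 2 ≠ 0) :
    (fun δ ↦ centrifugalEnergy μ ζ ξ δ - (spinEnergy μ ζ ξ - shapeForce μ ζ ξ * δ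
      + (shapeStiffness μ ζ ξ + shapeVar μ ζ ξ) / 2 * δ ^ 2)) =O[𝓝 0] fun δ ↦ δ ^ 3 := by
  have h₁ := (isBigO_sq_div_add hm).const_mul_left
    (((ζ + ξ + 2) * shapeForce μ ζ ξ - spinEnergy μ ζ ξ) / 4)
  have h₂ := (isBigO_sq_div_add hp).const_mul_left
    ((spinEnergy μ ζ ξ - (ζ + ξ - 2) * shapeForce μ ζ ξ) / 4)
  refine (h₁.add h₂).congr_left fun δ ↦ ?_
  unfold centrifugalEnergy shapeStiffness
  generalize (ζ + ξ - 2) ^ 2 / (ζ + ξ - 2 + δ) = x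
  generalize (ζ + ξ + 2) ^ 2 / (ζ + ξ + 2 + δ) = y
  field_simp
  ring

lemma isBigO_perturbedMass_scale (hμ : 0 < μ) (hζ : 0 < ζ) (hξ : 0 < ξ) :
    (fun v : ℝ × ℝ ↦ perturbedMass μ ζ ξ (v.1, (1 + v.2) ^ 6 - 1) - (ellipsoidMoment μ ζ ξ 0 0
      - v.1 / 2 * ellipsoidMoment μ ζ ξ 1 0
      - ((1 + v.2) ^ 6 - 1) / 2 * ellipsoidMoment μ ζ ξ 0 1
      + 3 / 8 * v.1 ^ 2 * ellipsoidMoment μ ζ ξ 2 0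
      + 1 / 4 * (v.1 * ((1 + v.2) ^ 6 - 1)) * ellipsoidMoment μ ζ ξ 1 1
      + 3 / 8 * ((1 + v.2) ^ 6 - 1) ^ 2 * ellipsoidMoment μ ζ ξ 0 2)) =O[𝓝 0]
      fun v ↦ ‖v‖ ^ 3 := by
  have hscale : Tendsto (fun v : ℝ × ℝ ↦ (v.1, (1 + v.2) ^ 6 - 1)) (𝓝 0) (𝓝 0) :=
    Continuous.tendsto' (by fun_prop) _ _ (by simp)
  have hbound : (fun v : ℝ × ℝ ↦ (v.1, (1 + v.2) ^ 6 - 1)) =O[𝓝 0] fun v ↦ ‖v‖ :=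
    isBigO_fst.prod_left ((isBigO_mul_of_continuousAt
      (k := fun v : ℝ × ℝ ↦ 6 + 15 * v.2 + 20 * v.2 ^ 2 + 15 * v.2 ^ 3 + 6 * v.2 ^ 4 + v.2 ^ 5)
      isBigO_snd (by fun_prop)).congr_left fun v ↦ by ring)
  exact ((isBigO_perturbedMass hμ hζ hξ).comp_tendsto hscale).trans (hbound.norm_left.pow 3)

lemma normalizedEnergy_zero :
    normalizedEnergy μ ζ ξ 0 = spinEnergy μ ζ ξ - ellipsoidMoment μ ζ ξ 0 0 := by
  have hmass : perturbedMass μ ζ ξ 0 = ellipsoidMoment μ ζ ξ 0 0 := by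
    simp [perturbedMass, ellipsoidMoment]
  have hzero : ((0 : ℝ), (1 + (0 : ℝ)) ^ 6 - 1) = 0 := by norm_num
  rw [normalizedEnergy, Prod.fst_zero, Prod.snd_zero, hzero, hmass, centrifugalEnergy]
  simp only [add_zero, sq, mul_self_div_self]
  ring

/-- The second variation of `normalizedEnergy` at the equilibrium. -/
noncomputable def secondVariation (μ ζ ξ : ℝ) (v : ℝ × ℝ) : ℝ :=
  shapeStiffness μ ζ ξ / 2 * v.1 ^ 2 + 2 * (-mixedVar μ ζ ξ) * (v.1 * v.2)
    + 2 * scaleVar μ ζ ξ * v.2 ^ 2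

lemma isBigO_normalizedEnergy (hμ : 0 < μ) (hζ : 0 < ζ) (hξ : 0 < ξ) (hm : ζ + ξ - 2 ≠ 0) :
    (fun v ↦ normalizedEnergy μ ζ ξ v - normalizedEnergy μ ζ ξ 0 - secondVariation μ ζ ξ v)
      =O[𝓝 0] fun v ↦ ‖v‖ ^ 3 := by
  have hp : ζ + ξ + 2 ≠ 0 := by positivity
  have hcentrifugal := isBigO_mul_of_continuousAt (k := fun v : ℝ × ℝ ↦ (1 + v.2) ^ 2)
    (((isBigO_centrifugalEnergy (μ := μ) hm hp).comp_tendsto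
      (continuous_fst.tendsto' (0 : ℝ × ℝ) 0 rfl)).trans (isBigO_fst.pow 3)) (by fun_prop)
  have hgravity := isBigO_mul_of_continuousAt (k := fun v : ℝ × ℝ ↦ 1 + v.2)
    (isBigO_perturbedMass_scale hμ hζ hξ) (by fun_prop)
  have h₂₁ := isBigO_mul_of_continuousAt (isBigO_monomial 2 1) (k := fun v ↦
    (2 + v.2) * ((shapeStiffness μ ζ ξ + shapeVar μ ζ ξ) / 2)
      - 3 / 8 * ellipsoidMoment μ ζ ξ 2 0) (by fun_prop)
  have h₁₂ := isBigO_mul_of_continuousAt (isBigO_monomial 1 2) (k := fun v ↦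
    -shapeForce μ ζ ξ - 1 / 4 * ellipsoidMoment μ ζ ξ 1 1 *
      (21 + 35 * v.2 + 35 * v.2 ^ 2 + 21 * v.2 ^ 3 + 7 * v.2 ^ 4 + v.2 ^ 5)) (by fun_prop)
  have h₀₃ := isBigO_mul_of_continuousAt (isBigO_monomial 0 3) (k := fun v ↦
    1 / 2 * ellipsoidMoment μ ζ ξ 0 1 * (35 + 35 * v.2 + 21 * v.2 ^ 2 + 7 * v.2 ^ 3 + v.2 ^ 4)
      - 3 / 8 * ellipsoidMoment μ ζ ξ 0 2 *
        (36 + (1 + v.2) * (12 * (15 + 20 * v.2 + 15 * v.2 ^ 2 + 6 * v.2 ^ 3 + v.2 ^ 4)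
          + v.2 * (15 + 20 * v.2 + 15 * v.2 ^ 2 + 6 * v.2 ^ 3 + v.2 ^ 4) ^ 2))) (by fun_prop)
  refine ((hcentrifugal.sub hgravity).add (h₂₁.add (h₁₂.add h₀₃))).congr_left fun v ↦ ?_
  rw [normalizedEnergy_zero]
  simp only [normalizedEnergy, secondVariation, Function.comp_apply, mixedVar, scaleVar, shapeVar,
    spinEnergy, shapeForce]
  ring

lemma eventually_normalizedEnergy_lt (hμ : 0 < μ) (hμζ : μ < ζ) (hζ₁ : ζ < 1) (hζξ : ζ * ξ = 1)
    (hlo : (ζ + ξ - 2) * shapeForce μ ζ ξ ≤ spinEnergy μ ζ ξ)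
    (hhi : spinEnergy μ ζ ξ ≤ (ζ + ξ + 2) * shapeForce μ ζ ξ) :
    ∀ᶠ v in 𝓝 0, v ≠ 0 → normalizedEnergy μ ζ ξ 0 < normalizedEnergy μ ζ ξ v := by
  have hζ := hμ.trans hμζ
  have hξ : 1 < ξ := by nlinarith
  have hm : 0 < ζ + ξ - 2 := by nlinarith [mul_pos (sub_pos.2 hζ₁) (sub_pos.2 hξ)]
  obtain ⟨hY, hdisc⟩ := second_variation_posDef hμ hμζ hζ₁ hζξ hlo hhi
  obtain ⟨k, hk, hbound⟩ := exists_pos_mul_norm_sq_le (a := shapeStiffness μ ζ ξ / 2)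
    (b := -mixedVar μ ζ ξ) (c := 2 * scaleVar μ ζ ξ) (by positivity) (by linarith)
  exact eventually_lt_of_isLittleO hk hbound <|
    (isBigO_normalizedEnergy hμ hζ (one_pos.trans hξ) hm.ne').trans_isLittleO
      (isLittleO_norm_pow_norm_pow (by norm_num))

end StrictMinimum

section Homogeneity

variable {μ ζ ξ : ℝ}

lemma ellipsoidMoment_smul (hμ : 0 < μ) (hζ : 0 < ζ) (hξ : 0 < ξ) {c : ℝ} (hc : 0 < c) (i j : ℕ) :
    ellipsoidMoment (c * μ) (c * ζ) (c * ξ) i j =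
      (√c)⁻¹ * (c⁻¹) ^ i * ellipsoidMoment μ ζ ξ i j := by
  simp only [ellipsoidMoment, integral_ellipsoidMeasure]
  have hsubst := integral_comp_mul_left_Ioi
    (fun s ↦ ellipsoidWeight (c * μ) (c * ζ) (c * ξ) s *
      (planarRatio (c * ζ) (c * ξ) s ^ i * polarRatio (c * μ) s ^ j)) 0 hc
  rw [mul_zero, smul_eq_mul, eq_inv_mul_iff_mul_eq₀ hc.ne'] at hsubst
  rw [← hsubst, ← integral_const_mul, ← integral_const_mul]
  refine setIntegral_congr_fun measurableSet_Ioi fun t (ht : 0 < t) ↦ ?_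
  have hweight : ellipsoidWeight (c * μ) (c * ζ) (c * ξ) (c * t) =
      (√c)⁻¹ * c⁻¹ * ellipsoidWeight μ ζ ξ t := by
    rw [ellipsoidWeight, ellipsoidWeight, show (c * t + c * μ) * (c * t + c * ζ) * (c * t + c * ξ) =
      c ^ 2 * c * ((t + μ) * (t + ζ) * (t + ξ)) by ring, sqrt_mul (by positivity),
      sqrt_mul (by positivity), sqrt_sq hc.le, mul_inv, mul_inv, mul_comm c⁻¹]
  have hplanar : planarRatio (c * ζ) (c * ξ) (c * t) = c⁻¹ * planarRatio ζ ξ t := by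
    unfold planarRatio; field_simp
  have hpolar : polarRatio (c * μ) (c * t) = polarRatio μ t := by
    unfold polarRatio; field_simp
  rw [hweight, hplanar, hpolar, mul_pow]
  field_simp

lemma rpow_neg_half_eq_ellipsoidWeight (hμ : 0 < μ) (hζ : 0 < ζ) (hξ : 0 < ξ) {t : ℝ} (ht : 0 ≤ t) :
    ((t + ξ) * (t + ζ) * (t + μ)) ^ (-(1 : ℝ) / 2) = ellipsoidWeight μ ζ ξ t := by
  rw [neg_div, rpow_neg (by positivity), ← sqrt_eq_rpow, ellipsoidWeight]
  ring_nf

lemma rpow_neg_three_halves_eq_ellipsoidWeight (hμ : 0 < μ) (hζ : 0 < ζ) (hξ : 0 < ξ) {t : ℝ}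
    (ht : 0 ≤ t) :
    ((t + ξ) * (t + μ) * (t + ζ)) ^ (-(3 : ℝ) / 2) =
      ellipsoidWeight μ ζ ξ t * ((t + μ) * (t + ζ) * (t + ξ))⁻¹ := by
  have hpos : 0 < (t + ξ) * (t + μ) * (t + ζ) := by positivity
  rw [show -(3 : ℝ) / 2 = -(1 / 2) + -1 by norm_num, rpow_add hpos, rpow_neg hpos.le,
    rpow_neg_one, ← sqrt_eq_rpow, ellipsoidWeight]
  ring_nf

variable {x y z : ℝ} (g : ℝ)

lemma riC1_eq_ellipsoidMoment (hx : 0 < x) (hy : 0 < y) (hz : 0 < z) :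
    riC1 g x y z = 2 * π * g * (ellipsoidMoment (y ^ 2) (z ^ 2) (x ^ 2) 1 1 / y ^ 2) := by
  rw [riC1, ellipsoidMoment, integral_ellipsoidMeasure, ← integral_div]
  refine congrArg _ (setIntegral_congr_fun measurableSet_Ioi fun t (ht : 0 < t) ↦ ?_)
  rw [rpow_neg_three_halves_eq_ellipsoidWeight (by positivity) (by positivity) (by positivity)
    ht.le, planarRatio, polarRatio]
  field_simp

lemma riC2_eq_ellipsoidMoment (hx : 0 < x) (hy : 0 < y) (hz : 0 < z) :
    riC2 g x y z = 2 * π * g * (ellipsoidMoment (y ^ 2) (z ^ 2) (x ^ 2) 1 0 -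
      ellipsoidMoment (y ^ 2) (z ^ 2) (x ^ 2) 1 1) := by
  have hint := integrable_moment (sq_pos_of_pos hy) (sq_pos_of_pos hz) (sq_pos_of_pos hx)
  rw [riC2, ellipsoidMoment, ellipsoidMoment, ← integral_sub (hint 1 0) (hint 1 1),
    integral_ellipsoidMeasure]
  refine congrArg _ (setIntegral_congr_fun measurableSet_Ioi fun t (ht : 0 < t) ↦ ?_)
  rw [rpow_neg_three_halves_eq_ellipsoidWeight (by positivity) (by positivity) (by positivity)
    ht.le, planarRatio, polarRatio]
  field_simp
  ring

end Homogeneity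

section PlanarEnergy

/-- The dimensionless size `b₃ / √(b₁b₂)` of the polar semi-axis, squared, for `q = (b₁, b₂)`. -/
noncomputable def polarSq (q : ℝ × ℝ) : ℝ := ((q.1 * q.2)⁻¹) ^ 3

/-- The dimensionless shape parameter `b₂ / b₁ + b₁ / b₂` of the plane of rotation. -/
noncomputable def planarShape (q : ℝ × ℝ) : ℝ := q.2 / q.1 + q.1 / q.2

/-- The inverse length scale `(b₁b₂)^(-1/2)`; the gravitational energy is homogeneous of degree
one in it. -/
noncomputable def planarScale (q : ℝ × ℝ) : ℝ := √((q.1 * q.2)⁻¹)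

/-- The potential integral in the reduced Hamiltonian. -/
noncomputable def potentialIntegral (q : ℝ × ℝ) : ℝ :=
  ∫ s in Set.Ioi (0 : ℝ),
    ((s + q.1 ^ 2) * (s + q.2 ^ 2) * (s + ((q.1 * q.2)⁻¹) ^ 2)) ^ (-(1 : ℝ) / 2)

/-- The effective potential of the planar motion; `A` and `B` are the squares of the sum and of
the difference of the two conserved momenta `m₃` and `m₆`. -/
noncomputable def planarEnergy (g A B : ℝ) (q : ℝ × ℝ) : ℝ :=
  (A / (q.1 - q.2) ^ 2 + B / (q.1 + q.2) ^ 2) / 4 - 2 * π * g * potentialIntegral q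

/-- The coordinates centred at `p` in which the planar energy is a multiple of
`normalizedEnergy`. -/
noncomputable def planarChart (p q : ℝ × ℝ) : ℝ × ℝ :=
  (planarShape q - planarShape p, planarScale q / planarScale p - 1)

/-- `shapeForce` at the dimensionless squared semi-axes of the ellipsoid of shape `q`. -/
noncomputable abbrev planarShapeForce (q : ℝ × ℝ) : ℝ :=
  shapeForce (polarSq q) (q.2 / q.1) (q.1 / q.2)

/-- `spinEnergy` at the dimensionless squared semi-axes of the ellipsoid of shape `q`. -/
noncomputable abbrev planarSpinEnergy (q : ℝ × ℝ) : ℝ :=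
  spinEnergy (polarSq q) (q.2 / q.1) (q.1 / q.2)

variable {p q : ℝ × ℝ}

lemma polarSq_pos (h₁ : 0 < q.1) (h₂ : 0 < q.2) : 0 < polarSq q := by
  unfold polarSq; positivity

lemma planarScale_pos (h₁ : 0 < q.1) (h₂ : 0 < q.2) : 0 < planarScale q := by
  unfold planarScale; positivity

lemma planarScale_sq (h₁ : 0 < q.1) (h₂ : 0 < q.2) : planarScale q ^ 2 = (q.1 * q.2)⁻¹ :=
  sq_sqrt (by positivity)

lemma polarSq_eq_planarScale_pow (h₁ : 0 < q.1) (h₂ : 0 < q.2) : polarSq q = planarScale q ^ 6 := by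
  rw [polarSq, ← planarScale_sq h₁ h₂, ← pow_mul]

lemma ellipsoidMoment_eq_planarScale_mul (h₁ : 0 < q.1) (h₂ : 0 < q.2) (i j : ℕ) :
    ellipsoidMoment (((q.1 * q.2)⁻¹) ^ 2) (q.2 ^ 2) (q.1 ^ 2) i j =
      planarScale q * ((q.1 * q.2)⁻¹) ^ i *
        ellipsoidMoment (polarSq q) (q.2 / q.1) (q.1 / q.2) i j := by
  rw [planarScale, sqrt_inv, ← ellipsoidMoment_smul (polarSq_pos h₁ h₂) (div_pos h₂ h₁)
    (div_pos h₁ h₂) (mul_pos h₁ h₂)]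
  unfold polarSq
  congr 1 <;> field_simp

lemma potentialIntegral_eq_ellipsoidMoment (h₁ : 0 < q.1) (h₂ : 0 < q.2) :
    potentialIntegral q =
      planarScale q * ellipsoidMoment (polarSq q) (q.2 / q.1) (q.1 / q.2) 0 0 := by
  have hscale := ellipsoidMoment_eq_planarScale_mul h₁ h₂ 0 0
  rw [pow_zero, mul_one] at hscale
  rw [← hscale, ellipsoidMoment, integral_ellipsoidMeasure, potentialIntegral]
  refine setIntegral_congr_fun measurableSet_Ioi fun t (ht : 0 < t) ↦ ?_
  simp only [pow_zero, mul_one]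
  exact rpow_neg_half_eq_ellipsoidWeight (by positivity) (by positivity) (by positivity) ht.le

lemma potentialIntegral_eq_perturbedMass (hp₁ : 0 < p.1) (hp₂ : 0 < p.2) (h₁ : 0 < q.1)
    (h₂ : 0 < q.2) :
    potentialIntegral q = planarScale q * perturbedMass (polarSq p) (p.2 / p.1) (p.1 / p.2)
      (planarShape q - planarShape p, polarSq q / polarSq p - 1) := by
  rw [potentialIntegral_eq_ellipsoidMoment h₁ h₂, ellipsoidMoment_zero_zero_eq_perturbedMass
    (polarSq_pos hp₁ hp₂) (div_pos hp₂ hp₁) (div_pos hp₁ hp₂) (polarSq_pos h₁ h₂) (by field_simp),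
    planarShape, planarShape]

lemma planarShape_sub_two (h₁ : 0 < q.1) (h₂ : 0 < q.2) :
    planarShape q - 2 = (q.1 - q.2) ^ 2 * (q.1 * q.2)⁻¹ := by
  unfold planarShape; field_simp; ring

lemma planarShape_add_two (h₁ : 0 < q.1) (h₂ : 0 < q.2) :
    planarShape q + 2 = (q.1 + q.2) ^ 2 * (q.1 * q.2)⁻¹ := by
  unfold planarShape; field_simp; ring

lemma GSp_eq (g : ℝ) (h₁ : 0 < q.1) (h₂ : 0 < q.2) :
    GSp g q.1 (q.1 * q.2)⁻¹ q.2 = 2 * π * g * planarScale q * (q.1 * q.2) *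
      ((planarShape q - 2) ^ 2 *
        ((planarShape q + 2) * planarShapeForce q - planarSpinEnergy q)) := by
  have hz : 0 < (q.1 * q.2)⁻¹ := by positivity
  rw [GSp, riC1_eq_ellipsoidMoment g h₁ hz h₂, riC2_eq_ellipsoidMoment g h₁ hz h₂,
    ellipsoidMoment_eq_planarScale_mul h₁ h₂, ellipsoidMoment_eq_planarScale_mul h₁ h₂,
    planarShapeForce, planarSpinEnergy, shapeForce, spinEnergy,
    moment_identity_of_linear (polarSq_pos h₁ h₂) (div_pos h₂ h₁) (div_pos h₁ h₂)]
  generalize ellipsoidMoment _ _ _ 1 0 = J₁₀, ellipsoidMoment _ _ _ 1 1 = J₁₁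
  unfold planarShape polarSq
  field_simp
  ring

lemma GSm_eq (g : ℝ) (h₁ : 0 < q.1) (h₂ : 0 < q.2) :
    GSm g q.1 (q.1 * q.2)⁻¹ q.2 = 2 * π * g * planarScale q * (q.1 * q.2) *
      ((planarShape q + 2) ^ 2 *
        (planarSpinEnergy q - (planarShape q - 2) * planarShapeForce q)) := by
  have hz : 0 < (q.1 * q.2)⁻¹ := by positivity
  rw [GSm, riC1_eq_ellipsoidMoment g h₁ hz h₂, riC2_eq_ellipsoidMoment g h₁ hz h₂,
    ellipsoidMoment_eq_planarScale_mul h₁ h₂, ellipsoidMoment_eq_planarScale_mul h₁ h₂,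
    planarShapeForce, planarSpinEnergy, shapeForce, spinEnergy,
    moment_identity_of_linear (polarSq_pos h₁ h₂) (div_pos h₂ h₁) (div_pos h₁ h₂)]
  generalize ellipsoidMoment _ _ _ 1 0 = J₁₀, ellipsoidMoment _ _ _ 1 1 = J₁₁
  unfold planarShape polarSq
  field_simp
  ring

lemma polarSq_div_polarSq (hp₁ : 0 < p.1) (hp₂ : 0 < p.2) (h₁ : 0 < q.1) (h₂ : 0 < q.2) :
    polarSq q / polarSq p = (1 + (planarChart p q).2) ^ 6 := by
  rw [polarSq_eq_planarScale_pow hp₁ hp₂, polarSq_eq_planarScale_pow h₁ h₂, ← div_pow, planarChart,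
    add_sub_cancel]

lemma planarEnergy_eq_normalizedEnergy (g : ℝ) (hp₂ : 0 < p.2) (hp : p.2 < p.1) (h₂ : 0 < q.2)
    (hq : q.2 < q.1) :
    planarEnergy g (GSp g p.1 (p.1 * p.2)⁻¹ p.2) (GSm g p.1 (p.1 * p.2)⁻¹ p.2) q =
      2 * π * g * planarScale p *
        normalizedEnergy (polarSq p) (p.2 / p.1) (p.1 / p.2) (planarChart p q) := by
  have hp₁ := hp₂.trans hp
  have h₁ := h₂.trans hq
  have hsub : q.1 - q.2 ≠ 0 := sub_ne_zero.2 hq.ne'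
  have hunit : planarScale p ^ 2 * (p.1 * p.2) = 1 := by
    rw [planarScale_sq hp₁ hp₂]; field_simp
  have hscale : planarScale q = planarScale p * (1 + (planarChart p q).2) := by
    have := (planarScale_pos hp₁ hp₂).ne'
    rw [planarChart, add_sub_cancel]; field_simp
  have hminus : 1 / (q.1 - q.2) ^ 2 = planarScale q ^ 2 / (planarShape q - 2) := by
    rw [planarShape_sub_two h₁ h₂, planarScale_sq h₁ h₂]; field_simp
  have hplus : 1 / (q.1 + q.2) ^ 2 = planarScale q ^ 2 / (planarShape q + 2) := by
    rw [planarShape_add_two h₁ h₂, planarScale_sq h₁ h₂]; field_simp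
  have hshape : planarShape p = p.2 / p.1 + p.1 / p.2 := rfl
  rw [planarEnergy, GSp_eq g hp₁ hp₂, GSm_eq g hp₁ hp₂, div_eq_mul_one_div _ ((q.1 - q.2) ^ 2),
    div_eq_mul_one_div _ ((q.1 + q.2) ^ 2), hminus, hplus,
    potentialIntegral_eq_perturbedMass hp₁ hp₂ h₁ h₂, polarSq_div_polarSq hp₁ hp₂ h₁ h₂, hscale,
    show planarShape q = planarShape p + (planarChart p q).1 by rw [planarChart]; ring,
    add_sub_cancel_left, normalizedEnergy, centrifugalEnergy, ← hshape,
    add_sub_right_comm, add_right_comm]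
  linear_combination (2 * π * g * planarScale p * (1 + (planarChart p q).2) ^ 2 / 4 *
    ((planarShape p - 2) ^ 2 * ((planarShape p + 2) * planarShapeForce p - planarSpinEnergy p) /
        (planarShape p - 2 + (planarChart p q).1) +
      (planarShape p + 2) ^ 2 * (planarSpinEnergy p - (planarShape p - 2) * planarShapeForce p) /
        (planarShape p + 2 + (planarChart p q).1))) * hunit

lemma eq_of_planarChart_eq_zero (hp₂ : 0 < p.2) (hp : p.2 < p.1) (h₂ : 0 < q.2) (hq : q.2 < q.1)
    (h : planarChart p q = 0) : q = p := by
  have hp₁ := hp₂.trans hp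
  have h₁ := h₂.trans hq
  have hm := planarScale_pos hp₁ hp₂
  obtain ⟨hshape, hscale⟩ := Prod.mk_eq_zero.1 h
  rw [sub_eq_zero] at hshape
  rw [sub_eq_zero, div_eq_one_iff_eq hm.ne'] at hscale
  have hprod : (q.1 * q.2)⁻¹ = (p.1 * p.2)⁻¹ := by
    rw [← planarScale_sq h₁ h₂, hscale, planarScale_sq hp₁ hp₂]
  have hw : (p.1 * p.2)⁻¹ ≠ 0 := by positivity
  have hadd : q.1 + q.2 = p.1 + p.2 := by
    have hsq := planarShape_add_two h₁ h₂
    rw [hshape, planarShape_add_two hp₁ hp₂, hprod, mul_left_inj' hw,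
      pow_left_inj₀ (by positivity) (by positivity) two_ne_zero] at hsq
    exact hsq.symm
  have hsub : q.1 - q.2 = p.1 - p.2 := by
    have hsq := planarShape_sub_two h₁ h₂
    rw [hshape, planarShape_sub_two hp₁ hp₂, hprod, mul_left_inj' hw,
      pow_left_inj₀ (sub_pos.2 hp).le (sub_pos.2 hq).le two_ne_zero] at hsq
    exact hsq.symm
  ext <;> linarith

lemma planarChart_self (hp₁ : 0 < p.1) (hp₂ : 0 < p.2) : planarChart p p = 0 := by
  rw [planarChart, sub_self, div_self (planarScale_pos hp₁ hp₂).ne', sub_self, Prod.mk_zero_zero]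

lemma tendsto_planarChart (hp₁ : 0 < p.1) (hp₂ : 0 < p.2) :
    Tendsto (planarChart p) (𝓝 p) (𝓝 0) := by
  have hm := (planarScale_pos hp₁ hp₂).ne'
  have hcont : ContinuousAt (planarChart p) p := by
    unfold planarChart planarShape planarScale
    fun_prop (disch := first | assumption | positivity)
  simpa only [ContinuousAt, planarChart_self hp₁ hp₂] using hcont

lemma memB.snd_pos {x y : ℝ} (h : memB x y) : 0 < y := h.2.2.trans h.2.1

lemma memB.one_lt_mul_sq {x y : ℝ} (h : memB x y) : 1 < x * y ^ 2 := by
  obtain ⟨-, hlt, hinv⟩ := h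
  have hsqrt : 0 < √x := inv_pos.1 hinv
  have hx : 0 < x := sqrt_pos.1 hsqrt
  have := pow_lt_pow_left₀ hlt hinv.le two_ne_zero
  rwa [inv_pow, sq_sqrt hx.le, inv_lt_iff_one_lt_mul₀' hx] at this

lemma memB.polarSq_lt (h : memB q.1 q.2) : polarSq q < q.2 / q.1 := by
  have h₁ : 0 < q.1 := h.snd_pos.trans h.1
  have h₂ := h.snd_pos
  have hlt := one_lt_pow₀ h.one_lt_mul_sq two_ne_zero
  rw [polarSq, inv_pow, lt_div_iff₀ h₁, inv_mul_lt_iff₀ (by positivity)]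
  nlinarith

lemma eventually_planarEnergy_lt {g : ℝ} (hg : 0 < g) (hp : memB p.1 p.2)
    (hG : 0 ≤ GSp g p.1 (p.1 * p.2)⁻¹ p.2) :
    ∀ᶠ q in 𝓝 p, q ≠ p →
      planarEnergy g (GSp g p.1 (p.1 * p.2)⁻¹ p.2) (GSm g p.1 (p.1 * p.2)⁻¹ p.2) p <
        planarEnergy g (GSp g p.1 (p.1 * p.2)⁻¹ p.2) (GSm g p.1 (p.1 * p.2)⁻¹ p.2) q := by
  have hp₂ := hp.snd_pos
  have hp₁ := hp₂.trans hp.1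
  have hμ := polarSq_pos hp₁ hp₂
  have hζ₁ := (div_lt_one hp₁).2 hp.1
  have hζξ : p.2 / p.1 * (p.1 / p.2) = 1 := by field_simp
  have hm := planarScale_pos hp₁ hp₂
  have hc : 0 < 2 * π * g * planarScale p := by positivity
  have hhi : planarSpinEnergy p ≤ (planarShape p + 2) * planarShapeForce p := by
    have hpos : 0 < (planarShape p - 2) ^ 2 := by
      have := sub_ne_zero.2 hp.1.ne'
      rw [planarShape_sub_two hp₁ hp₂]; positivity
    rw [GSp_eq g hp₁ hp₂] at hG
    have := nonneg_of_mul_nonneg_right hG (by positivity)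
    exact sub_nonneg.1 (nonneg_of_mul_nonneg_right this hpos)
  have hmin := eventually_normalizedEnergy_lt hμ hp.polarSq_lt hζ₁ hζξ
    (sub_two_mul_shapeForce_lt_spinEnergy hμ hp.polarSq_lt hζ₁ hζξ).le hhi
  have hpos : ∀ᶠ q : ℝ × ℝ in 𝓝 p, 0 < q.2 := continuousAt_snd.eventually (lt_mem_nhds hp₂)
  have hlt : ∀ᶠ q : ℝ × ℝ in 𝓝 p, q.2 < q.1 :=
    continuousAt_snd.eventually_lt continuousAt_fst hp.1
  filter_upwards [(tendsto_planarChart hp₁ hp₂).eventually hmin, hpos, hlt] with q hq h₂ h₁ hne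
  rw [planarEnergy_eq_normalizedEnergy g hp₂ hp.1 hp₂ hp.1,
    planarEnergy_eq_normalizedEnergy g hp₂ hp.1 h₂ h₁, planarChart_self hp₁ hp₂]
  exact mul_lt_mul_of_pos_left (hq (mt (eq_of_planarChart_eq_zero hp₂ hp.1 h₂ h₁) hne)) hc

end PlanarEnergy

section Differentiability

variable {q : ℝ × ℝ}

lemma differentiableAt_perturbedMass {μ ζ ξ : ℝ} (hμ : 0 < μ) (hζ : 0 < ζ) (hξ : 0 < ξ) :
    DifferentiableAt ℝ (perturbedMass μ ζ ξ) 0 := by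
  have hexpand := isBigO_perturbedMass hμ hζ hξ
  refine (((hexpand.congr_right fun v ↦ by rw [sub_zero]).hasFDerivAt (𝕜 := ℝ)
    (show 1 < 3 by norm_num)).differentiableAt.add
      (?_ : DifferentiableAt ℝ _ (0 : ℝ × ℝ))).congr_of_eventuallyEq
        (.of_forall fun v ↦ (sub_add_cancel _ _).symm)
  fun_prop

lemma differentiableAt_potentialIntegral (h₁ : 0 < q.1) (h₂ : 0 < q.2) :
    DifferentiableAt ℝ potentialIntegral q := by
  have hmass := differentiableAt_perturbedMass (polarSq_pos h₁ h₂) (div_pos h₂ h₁) (div_pos h₁ h₂)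
  have hprod : q.1 * q.2 ≠ 0 := (mul_pos h₁ h₂).ne'
  have hinv : (q.1 * q.2)⁻¹ ≠ 0 := inv_ne_zero hprod
  have hscale : DifferentiableAt ℝ planarScale q := by
    unfold planarScale
    fun_prop (disch := assumption)
  have hchart : DifferentiableAt ℝ
      (fun q' ↦ (planarShape q' - planarShape q, polarSq q' / polarSq q - 1)) q := by
    have := h₁.ne'
    have := h₂.ne'
    have := (polarSq_pos h₁ h₂).ne'
    simp only [planarShape, polarSq]
    fun_prop (disch := assumption)
  have hzero : (planarShape q - planarShape q, polarSq q / polarSq q - 1) = 0 := by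
    rw [sub_self, div_self (polarSq_pos h₁ h₂).ne', sub_self, Prod.mk_zero_zero]
  rw [← hzero] at hmass
  refine (hscale.mul (hmass.comp q hchart)).congr_of_eventuallyEq ?_
  filter_upwards [continuousAt_fst.eventually (lt_mem_nhds h₁),
    continuousAt_snd.eventually (lt_mem_nhds h₂)] with q' h₁' h₂'
  exact potentialIntegral_eq_perturbedMass h₁ h₂ h₁' h₂'

lemma memB.fst_pos {x y : ℝ} (h : memB x y) : 0 < x := h.snd_pos.trans h.1

lemma memB.inv_mul_lt {x y : ℝ} (h : memB x y) : (x * y)⁻¹ < y := by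
  rw [inv_lt_iff_one_lt_mul₀ (mul_pos h.fst_pos h.snd_pos)]
  linarith [h.one_lt_mul_sq]

lemma eventually_memB (h : memB q.1 q.2) : ∀ᶠ q' : ℝ × ℝ in 𝓝 q, memB q'.1 q'.2 := by
  have hinv : ContinuousAt (fun q' : ℝ × ℝ ↦ (√q'.1)⁻¹) q :=
    continuousAt_fst.sqrt.inv₀ (sqrt_pos.2 h.fst_pos).ne'
  exact (continuousAt_snd.eventually_lt continuousAt_fst h.1).and
    ((hinv.eventually_lt continuousAt_snd h.2.1).and (continuousAt_const.eventually_lt hinv h.2.2))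

/-- The kinetic energy of the deformation of the ellipsoid. -/
noncomputable def deformationEnergy (p : Fin 10 → ℝ) : ℝ :=
  ((p 1 ^ 2 + (p 0 * p 1)⁻¹ ^ 2) * p 0 ^ 2 * p 2 ^ 2 +
      (p 0 ^ 2 + (p 0 * p 1)⁻¹ ^ 2) * p 1 ^ 2 * p 3 ^ 2 - 2 * (p 0 * p 1)⁻¹ * p 2 * p 3) /
    (2 * (p 0 ^ 2 * p 1 ^ 2 + p 0 ^ 2 * (p 0 * p 1)⁻¹ ^ 2 + p 1 ^ 2 * (p 0 * p 1)⁻¹ ^ 2))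

/-- The kinetic energy of rotation and circulation in the plane of the semi-axes `x` and `z`, with
momenta `m` and `n`. -/
noncomputable def planeRotationEnergy (x z m n : ℝ) : ℝ :=
  ((x ^ 2 + z ^ 2) * (m ^ 2 + n ^ 2) + 4 * x * z * m * n) / (2 * (x ^ 2 - z ^ 2) ^ 2)

/-- The total kinetic energy of rotation and circulation of an ellipsoid with semi-axes `x`, `z`,
`y` and momenta `m`, `n`. -/
noncomputable def rotationEnergy (x y z : ℝ) (m n : Fin 3 → ℝ) : ℝ :=
  planeRotationEnergy x z (m 2) (n 2) + planeRotationEnergy x y (m 1) (n 1) +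
    planeRotationEnergy z y (m 0) (n 0)

lemma Hred_eq (g : ℝ) (p : Fin 10 → ℝ) :
    Hred g p = deformationEnergy p +
      rotationEnergy (p 0) (p 0 * p 1)⁻¹ (p 1) ![p 4, p 5, p 6] ![p 7, p 8, p 9] -
      2 * π * g * potentialIntegral (p 0, p 1) := by
  simp only [rotationEnergy, ← add_assoc]
  rfl

lemma differentiableAt_Hred (g : ℝ) {p : Fin 10 → ℝ} (hp : memB (p 0) (p 1)) :
    DifferentiableAt ℝ (Hred g) p := by
  have h₁ := hp.fst_pos
  have h₂ := hp.snd_pos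
  have h₃ : 0 < (p 0 * p 1)⁻¹ := by positivity
  have hprod : p 0 * p 1 ≠ 0 := by positivity
  have hdef : 2 * (p 0 ^ 2 * p 1 ^ 2 + p 0 ^ 2 * (p 0 * p 1)⁻¹ ^ 2 +
    p 1 ^ 2 * (p 0 * p 1)⁻¹ ^ 2) ≠ 0 := by positivity
  have hne {u v : ℝ} (hv : 0 < v) (hvu : v < u) : 2 * (u ^ 2 - v ^ 2) ^ 2 ≠ 0 := by
    have : u ^ 2 - v ^ 2 ≠ 0 := (sub_pos.2 (pow_lt_pow_left₀ hvu hv.le two_ne_zero)).ne'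
    positivity
  have hne₁₂ := hne h₂ hp.1
  have hne₁₃ := hne h₃ (hp.inv_mul_lt.trans hp.1)
  have hne₂₃ := hne h₃ hp.inv_mul_lt
  have hpot : DifferentiableAt ℝ (fun p : Fin 10 → ℝ ↦ potentialIntegral (p 0, p 1)) p :=
    (differentiableAt_potentialIntegral (q := (p 0, p 1)) h₁ h₂).comp p
      (f := fun p : Fin 10 → ℝ ↦ (p 0, p 1)) (by fun_prop)
  simp only [funext (Hred_eq g), deformationEnergy, rotationEnergy, planeRotationEnergy,
    Matrix.cons_val]
  fun_prop (disch := assumption)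

end Differentiability

section TransverseStability

/-- The bracket in `GSp`, so that `GSp` is `(x - z) ^ 4 / (x * z)` times it. -/
noncomputable def spinBracketPlus (g x y z : ℝ) : ℝ :=
  (x * y ^ 2 * z + (x ^ 2 * y ^ 2 - x ^ 2 * z ^ 2 + y ^ 2 * z ^ 2)) * riC1 g x y z +
    (x * z + y ^ 2) * riC2 g x y z

/-- The bracket in `GSm`, so that `GSm` is `(x + z) ^ 4 / (x * z)` times it. -/
noncomputable def spinBracketMinus (g x y z : ℝ) : ℝ :=
  (x * y ^ 2 * z - (x ^ 2 * y ^ 2 - x ^ 2 * z ^ 2 + y ^ 2 * z ^ 2)) * riC1 g x y z +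
    (x * z - y ^ 2) * riC2 g x y z

/-- The condition for stability of a planar motion, with squared sum `A` and squared difference `B`
of the momenta in the plane of the semi-axes `x` and `z`, against momenta in the plane of `x` and
`y`: up to the positive factor `B - A` it is the determinant of `transverseForm`. -/
noncomputable def transverseDiscriminant (A B x y z : ℝ) : ℝ :=
  B * ((1 / (x - y) ^ 2 - 1 / (x + z) ^ 2) * (1 / (x + y) ^ 2 - 1 / (x + z) ^ 2)) -
    A * ((1 / (x - z) ^ 2 - 1 / (x - y) ^ 2) * (1 / (x - z) ^ 2 - 1 / (x + y) ^ 2))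

variable {g x y z : ℝ}

lemma GSp_eq_mul_spinBracketPlus (g x y z : ℝ) :
    GSp g x y z = (x - z) ^ 4 / (x * z) * spinBracketPlus g x y z := rfl

lemma GSm_eq_mul_spinBracketMinus (g x y z : ℝ) :
    GSm g x y z = (x + z) ^ 4 / (x * z) * spinBracketMinus g x y z := rfl

lemma GSp_swap (g x y z : ℝ) : GSp g z y x = GSp g x y z := by
  have hprod (s : ℝ) : (s + z ^ 2) * (s + y ^ 2) * (s + x ^ 2) =
      (s + x ^ 2) * (s + y ^ 2) * (s + z ^ 2) := by ring
  simp only [GSp, riC1, riC2, hprod]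
  ring

lemma GSm_swap (g x y z : ℝ) : GSm g z y x = GSm g x y z := by
  have hprod (s : ℝ) : (s + z ^ 2) * (s + y ^ 2) * (s + x ^ 2) =
      (s + x ^ 2) * (s + y ^ 2) * (s + z ^ 2) := by ring
  simp only [GSm, riC1, riC2, hprod]
  ring

lemma riC1_pos (hg : 0 < g) (hx : 0 < x) (hy : 0 < y) (hz : 0 < z) : 0 < riC1 g x y z := by
  have := ellipsoidMoment_pos (sq_pos_of_pos hy) (sq_pos_of_pos hz) (sq_pos_of_pos hx) 1 1
  rw [riC1_eq_ellipsoidMoment g hx hy hz]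
  positivity

lemma riC2_nonneg (hg : 0 < g) (x y z : ℝ) : 0 ≤ riC2 g x y z :=
  mul_nonneg (by positivity)
    (setIntegral_nonneg measurableSet_Ioi fun s (hs : 0 < s) ↦ by positivity)

lemma spinBracketPlus_mul_lt_spinBracketMinus_mul (hg : 0 < g) (hy : 0 < y) (hyx : y < x)
    (hyz : y < z) :
    spinBracketPlus g x y z * ((2 * x - z) ^ 2 - y ^ 2) <
      spinBracketMinus g x y z * ((2 * x + z) ^ 2 - y ^ 2) := by
  have hx := hy.trans hyx
  have hC₁ := riC1_pos hg hx hy (hy.trans hyz)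
  have hC₂ := riC2_nonneg hg x y z
  have hyx₂ : 0 < x ^ 2 - y ^ 2 := sub_pos.2 (pow_lt_pow_left₀ hyx hy.le two_ne_zero)
  have hyz₂ : 0 < z ^ 2 - y ^ 2 := sub_pos.2 (pow_lt_pow_left₀ hyz hy.le two_ne_zero)
  rw [← sub_pos]
  calc 0 < riC2 g x y z * ((z ^ 2 - y ^ 2) * (2 * (x ^ 2 - y ^ 2) + 6 * x ^ 2)) +
        2 * (riC1 g x y z * ((z ^ 2 - y ^ 2) *
          (3 * x ^ 4 + x ^ 2 * (x ^ 2 - y ^ 2) + z ^ 2 * (x ^ 2 - y ^ 2)))) := by positivity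
    _ = _ := by unfold spinBracketMinus spinBracketPlus; ring

lemma transverseDiscriminant_pos (hg : 0 < g) (hy : 0 < y) (hyx : y < x) (hyz : y < z)
    (hxz : x ≠ z) : 0 < transverseDiscriminant (GSp g x y z) (GSm g x y z) x y z := by
  have hx := hy.trans hyx
  have hz := hy.trans hyz
  have hsub : x - z ≠ 0 := sub_ne_zero.2 hxz
  have hyx₁ : 0 < x - y := sub_pos.2 hyx
  have hyz₂ : 0 < z ^ 2 - y ^ 2 := sub_pos.2 (pow_lt_pow_left₀ hyz hy.le two_ne_zero)
  have hlt := sub_pos.2 (spinBracketPlus_mul_lt_spinBracketMinus_mul hg hy hyx hyz)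
  have heq : transverseDiscriminant (GSp g x y z) (GSm g x y z) x y z =
      (spinBracketMinus g x y z * ((2 * x + z) ^ 2 - y ^ 2) -
        spinBracketPlus g x y z * ((2 * x - z) ^ 2 - y ^ 2)) *
        (z ^ 2 - y ^ 2) / (x * z * ((x - y) * (x + y)) ^ 2) := by
    rw [transverseDiscriminant, GSp_eq_mul_spinBracketPlus, GSm_eq_mul_spinBracketMinus]
    field_simp
    ring
  rw [heq]
  positivity

lemma GSp_lt_GSm (hg : 0 < g) (hy : 0 < y) (hyz : y < z) (hzx : z < x) (h : 0 ≤ GSp g x y z) :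
    GSp g x y z < GSm g x y z := by
  have hz := hy.trans hyz
  have hx := hz.trans hzx
  have hlt := spinBracketPlus_mul_lt_spinBracketMinus_mul hg hy (hyz.trans hzx) hyz
  have hzx₁ : 0 < x - z := sub_pos.2 hzx
  have hyz₂ : 0 < z ^ 2 - y ^ 2 := sub_pos.2 (pow_lt_pow_left₀ hyz hy.le two_ne_zero)
  have hplus : 0 < (2 * x + z) ^ 2 - y ^ 2 := by nlinarith
  have hminus : 0 < (2 * x - z) ^ 2 - y ^ 2 := by nlinarith
  rw [GSp_eq_mul_spinBracketPlus] at h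
  have hbracket := nonneg_of_mul_nonneg_right h (by positivity)
  have hcoeff : (x - z) ^ 4 * ((2 * x + z) ^ 2 - y ^ 2) ≤
      (x + z) ^ 4 * ((2 * x - z) ^ 2 - y ^ 2) := by
    have hlin : (x - z) * ((2 * x + z) ^ 2 - y ^ 2) ≤ (x + z) * ((2 * x - z) ^ 2 - y ^ 2) := by
      linarith [mul_pos hz hyz₂]
    have hcube : (x - z) ^ 3 ≤ (x + z) ^ 3 := pow_le_pow_left₀ hzx₁.le (by linarith) 3
    calc _ = (x - z) ^ 3 * ((x - z) * ((2 * x + z) ^ 2 - y ^ 2)) := by ring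
      _ ≤ (x + z) ^ 3 * ((x + z) * ((2 * x - z) ^ 2 - y ^ 2)) := by gcongr
      _ = _ := by ring
  rw [GSp_eq_mul_spinBracketPlus, GSm_eq_mul_spinBracketMinus, div_mul_eq_mul_div,
    div_mul_eq_mul_div, div_lt_div_iff_of_pos_right (by positivity)]
  refine lt_of_mul_lt_mul_right ?_ hplus.le
  calc _ = spinBracketPlus g x y z * ((x - z) ^ 4 * ((2 * x + z) ^ 2 - y ^ 2)) := by ring
    _ ≤ spinBracketPlus g x y z * ((x + z) ^ 4 * ((2 * x - z) ^ 2 - y ^ 2)) := by gcongr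
    _ = (x + z) ^ 4 * (spinBracketPlus g x y z * ((2 * x - z) ^ 2 - y ^ 2)) := by ring
    _ < (x + z) ^ 4 * (spinBracketMinus g x y z * ((2 * x + z) ^ 2 - y ^ 2)) := by gcongr
    _ = _ := by ring

end TransverseStability

section RotationalMinimum

/-- The quadratic form that measures, up to the factor `4 * (f ^ 2 - e ^ 2)`, the energy cost of
transferring momenta `m`, `n` from the plane of the semi-axes `x` and `z`, where they have sum `e`
and difference `f`, to the plane of `x` and `y`. -/
noncomputable def transverseForm (e f x y z m n : ℝ) : ℝ :=
  ((1 / (x - y) ^ 2 - 1 / (x + z) ^ 2) * f ^ 2 +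
      (1 / (x - z) ^ 2 - 1 / (x - y) ^ 2) * e ^ 2) * (m + n) ^ 2 +
    ((1 / (x + y) ^ 2 - 1 / (x + z) ^ 2) * f ^ 2 +
      (1 / (x - z) ^ 2 - 1 / (x + y) ^ 2) * e ^ 2) * (m - n) ^ 2 -
    2 * (1 / (x - z) ^ 2 - 1 / (x + z) ^ 2) * (e * f) * ((m + n) * (m - n))

variable {e f x y z : ℝ}

lemma one_div_sq_lt_one_div_sq {u v : ℝ} (h : u ^ 2 < v ^ 2) (hu : u ≠ 0) :
    1 / v ^ 2 < 1 / u ^ 2 :=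
  one_div_lt_one_div_of_lt (sq_pos_of_ne_zero hu) h

lemma planeRotationEnergy_eq (h : x ^ 2 - z ^ 2 ≠ 0) (m n : ℝ) :
    planeRotationEnergy x z m n =
      (1 / (x - z) ^ 2 * (m + n) ^ 2 + 1 / (x + z) ^ 2 * (m - n) ^ 2) / 4 := by
  rw [sq_sub_sq] at h
  rw [planeRotationEnergy, sq_sub_sq]
  field_simp [left_ne_zero_of_mul h, right_ne_zero_of_mul h]
  ring

lemma transverseForm_pos (he : 0 ≤ e) (hef : e < f) (hx : 0 < x) (hy : 0 < y) (hz : 0 < z)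
    (hyz : y < z) (hxy : x ≠ y) (hxz : x ≠ z)
    (hdisc : 0 < transverseDiscriminant (e ^ 2) (f ^ 2) x y z) {m n : ℝ} (hmn : m ≠ 0 ∨ n ≠ 0) :
    0 < transverseForm e f x y z m n := by
  have hsq : 0 < f ^ 2 - e ^ 2 := sub_pos.2 (pow_lt_pow_left₀ hef he two_ne_zero)
  have hxz_lt := sub_pos.2 <| one_div_sq_lt_one_div_sq (u := x - z) (v := x + z)
    (by nlinarith [mul_pos hx hz]) (sub_ne_zero.2 hxz)
  have hxy_lt := sub_pos.2 <| one_div_sq_lt_one_div_sq (u := x - y) (v := x + z)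
    (by nlinarith [mul_pos hx hy, mul_pos hx hz]) (sub_ne_zero.2 hxy)
  unfold transverseDiscriminant at hdisc
  unfold transverseForm
  generalize 1 / (x - z) ^ 2 = a at *
  generalize 1 / (x + z) ^ 2 = b at *
  generalize 1 / (x - y) ^ 2 = c at *
  generalize 1 / (x + y) ^ 2 = d at *
  have hlead : 0 < (c - b) * f ^ 2 + (a - c) * e ^ 2 := by
    linarith [mul_pos hxy_lt hsq, mul_nonneg hxz_lt.le (sq_nonneg e)]
  have hdet : (-((a - b) * (e * f))) ^ 2 <
      ((d - b) * f ^ 2 + (a - d) * e ^ 2) * ((c - b) * f ^ 2 + (a - c) * e ^ 2) := by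
    linarith [mul_pos hsq hdisc]
  obtain ⟨k, hk, hform⟩ := exists_pos_mul_norm_sq_le hlead hdet
  have hne : (m - n, m + n) ≠ (0 : ℝ × ℝ) := by
    contrapose! hmn
    rw [Prod.mk_eq_zero] at hmn
    constructor <;> linarith [hmn.1, hmn.2]
  calc 0 < k * ‖(m - n, m + n)‖ ^ 2 := mul_pos hk (sq_pos_of_pos (norm_pos_iff.2 hne))
    _ ≤ _ := hform _
    _ = _ := by ring

lemma transverseForm_nonneg (he : 0 ≤ e) (hef : e < f) (hx : 0 < x) (hy : 0 < y) (hz : 0 < z)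
    (hyz : y < z) (hxy : x ≠ y) (hxz : x ≠ z)
    (hdisc : 0 < transverseDiscriminant (e ^ 2) (f ^ 2) x y z) (m n : ℝ) :
    0 ≤ transverseForm e f x y z m n := by
  by_cases hmn : m ≠ 0 ∨ n ≠ 0
  · exact (transverseForm_pos he hef hx hy hz hyz hxy hxz hdisc hmn).le
  · obtain ⟨rfl, rfl⟩ : m = 0 ∧ n = 0 := by simpa only [not_or, not_not] using hmn
    simp [transverseForm]

lemma mul_rotationEnergy_sub (hy : 0 < y) (hyz : y < z) (hzx : z < x) {m n : Fin 3 → ℝ}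
    (hm : m 0 ^ 2 + m 1 ^ 2 + m 2 ^ 2 = ((e + f) / 2) ^ 2)
    (hn : n 0 ^ 2 + n 1 ^ 2 + n 2 ^ 2 = ((e - f) / 2) ^ 2) :
    (f ^ 2 - e ^ 2) * (4 * rotationEnergy x y z m n -
        (e ^ 2 / (x - z) ^ 2 + f ^ 2 / (x + z) ^ 2)) =
      (1 / (x - z) ^ 2 - 1 / (x + z) ^ 2) * (f * (m 2 + n 2) - e * (m 2 - n 2)) ^ 2 +
        transverseForm e f x y z (m 1) (n 1) + transverseForm e f z y x (m 0) (n 0) := by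
  have hne {u v : ℝ} (hv : 0 < v) (hvu : v < u) : u ^ 2 - v ^ 2 ≠ 0 :=
    (sub_pos.2 (pow_lt_pow_left₀ hvu hv.le two_ne_zero)).ne'
  rw [rotationEnergy, planeRotationEnergy_eq (hne (hy.trans hyz) hzx),
    planeRotationEnergy_eq (hne hy (hyz.trans hzx)), planeRotationEnergy_eq (hne hy hyz),
    div_eq_mul_one_div (e ^ 2), div_eq_mul_one_div (f ^ 2)]
  simp only [transverseForm, sub_sq_comm z x, add_comm z x]
  generalize 1 / (x - z) ^ 2 = a
  generalize 1 / (x + z) ^ 2 = b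
  linear_combination (2 * (b * f ^ 2 - a * e ^ 2) + 2 * (a - b) * (e * f)) * hm +
    (2 * (b * f ^ 2 - a * e ^ 2) - 2 * (a - b) * (e * f)) * hn

lemma eq_planar_of_rotationEnergy_le (hy : 0 < y) (hyz : y < z) (hzx : z < x) (he : 0 ≤ e)
    (hef : e < f) (hdisc₁ : 0 < transverseDiscriminant (e ^ 2) (f ^ 2) x y z)
    (hdisc₂ : 0 < transverseDiscriminant (e ^ 2) (f ^ 2) z y x) {m n : Fin 3 → ℝ}
    (hm : m 0 ^ 2 + m 1 ^ 2 + m 2 ^ 2 = ((e + f) / 2) ^ 2)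
    (hn : n 0 ^ 2 + n 1 ^ 2 + n 2 ^ 2 = ((e - f) / 2) ^ 2) (hm₂ : 0 < m 2)
    (hle : 4 * rotationEnergy x y z m n ≤ e ^ 2 / (x - z) ^ 2 + f ^ 2 / (x + z) ^ 2) :
    m = ![0, 0, (e + f) / 2] ∧ n = ![0, 0, (e - f) / 2] := by
  have hz := hy.trans hyz
  have hx := hz.trans hzx
  have hsq : 0 < f ^ 2 - e ^ 2 := sub_pos.2 (pow_lt_pow_left₀ hef he two_ne_zero)
  have hcoeff := sub_pos.2 <| one_div_sq_lt_one_div_sq (u := x - z) (v := x + z)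
    (by nlinarith [mul_pos hx hz]) (sub_pos.2 hzx).ne'
  have hsum : _ ≤ (0 : ℝ) := (mul_rotationEnergy_sub hy hyz hzx hm hn).symm.trans_le
    (mul_nonpos_of_nonneg_of_nonpos hsq.le (sub_nonpos.2 hle))
  have hplanar : 0 ≤ (1 / (x - z) ^ 2 - 1 / (x + z) ^ 2) *
      (f * (m 2 + n 2) - e * (m 2 - n 2)) ^ 2 := mul_nonneg hcoeff.le (sq_nonneg _)
  have hxy : x ≠ y := (hyz.trans hzx).ne'
  have hform₁ := transverseForm_nonneg he hef hx hy hz hyz hxy hzx.ne' hdisc₁ (m 1) (n 1)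
  have hform₂ :=
    transverseForm_nonneg he hef hz hy hx (hyz.trans hzx) hyz.ne' hzx.ne hdisc₂ (m 0) (n 0)
  obtain ⟨hm₁, hn₁⟩ : m 1 = 0 ∧ n 1 = 0 := by
    by_contra h
    linarith [transverseForm_pos he hef hx hy hz hyz hxy hzx.ne' hdisc₁ (not_and_or.1 h)]
  obtain ⟨hm₀, hn₀⟩ : m 0 = 0 ∧ n 0 = 0 := by
    by_contra h
    linarith [transverseForm_pos he hef hz hy hx (hyz.trans hzx) hyz.ne' hzx.ne hdisc₂
      (not_and_or.1 h)]
  have hm₂_eq : m 2 = (e + f) / 2 := by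
    rw [hm₀, hm₁] at hm
    exact (pow_left_inj₀ hm₂.le (by linarith) two_ne_zero).1 (by linarith)
  have hlin : f * (m 2 + n 2) - e * (m 2 - n 2) = 0 :=
    pow_eq_zero_iff two_ne_zero |>.1 <|
      (mul_eq_zero.1 (hplanar.antisymm' (by linarith))).resolve_left hcoeff.ne'
  have hn₂_eq : n 2 = (e - f) / 2 := by
    rw [hm₂_eq] at hlin
    exact mul_left_cancel₀ (show f + e ≠ 0 by linarith) (by linear_combination hlin)
  constructor <;> ext i <;> fin_cases i <;> assumption

end RotationalMinimum

section ConstrainedMinimum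

/-- The manifold `S_{L,R}` of states with `‖η_l‖ = L` and `‖η_r‖ = R`. -/
def momentumShell (L R : ℝ) : Set (Fin 10 → ℝ) :=
  {p | √(p 4 ^ 2 + p 5 ^ 2 + p 6 ^ 2) = L ∧ √(p 7 ^ 2 + p 8 ^ 2 + p 9 ^ 2) = R}

/-- The state of the ellipsoid of shape `q` without deformation momentum, whose rotation and
circulation momenta lie in the plane of the first two semi-axes and have sum `e` and difference
`f`. -/
noncomputable def planarState (e f : ℝ) (q : ℝ × ℝ) : Fin 10 → ℝ :=
  ![q.1, q.2, 0, 0, 0, 0, (e + f) / 2, 0, 0, (e - f) / 2]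

variable {g e f : ℝ} {p : Fin 10 → ℝ} {q : ℝ × ℝ}

lemma deformationEnergy_eq (h₀ : p 0 ≠ 0) (h₁ : p 1 ≠ 0) :
    deformationEnergy p =
      (p 0 ^ 2 * p 1 ^ 2 * (p 2 ^ 2 + p 3 ^ 2) +
        (p 0 * p 1)⁻¹ ^ 2 * (p 0 * p 2 - p 1 * p 3) ^ 2) /
      (2 * (p 0 ^ 2 * p 1 ^ 2 + p 0 ^ 2 * (p 0 * p 1)⁻¹ ^ 2 + p 1 ^ 2 * (p 0 * p 1)⁻¹ ^ 2)) := by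
  rw [deformationEnergy]
  congr 1
  field_simp
  ring

lemma deformationEnergy_nonneg (h₀ : p 0 ≠ 0) (h₁ : p 1 ≠ 0) : 0 ≤ deformationEnergy p := by
  rw [deformationEnergy_eq h₀ h₁]
  positivity

lemma deformationEnergy_pos (h₀ : p 0 ≠ 0) (h₁ : p 1 ≠ 0) (h : p 2 ≠ 0 ∨ p 3 ≠ 0) :
    0 < deformationEnergy p := by
  have hsq : 0 < p 2 ^ 2 + p 3 ^ 2 := by rcases h with h | h <;> positivity
  rw [deformationEnergy_eq h₀ h₁]
  positivity

lemma rotationEnergy_planar {x z : ℝ} (h : x ^ 2 - z ^ 2 ≠ 0) (y e f : ℝ) :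
    rotationEnergy x y z ![0, 0, (e + f) / 2] ![0, 0, (e - f) / 2] =
      (e ^ 2 / (x - z) ^ 2 + f ^ 2 / (x + z) ^ 2) / 4 := by
  have hzero (u v : ℝ) : planeRotationEnergy u v 0 0 = 0 := by simp [planeRotationEnergy]
  simp only [rotationEnergy, Matrix.cons_val, hzero, planeRotationEnergy_eq h]
  ring

lemma Hred_planarState (g e f : ℝ) (hq : memB q.1 q.2) :
    Hred g (planarState e f q) = planarEnergy g (e ^ 2) (f ^ 2) q := by
  have hne : q.1 ^ 2 - q.2 ^ 2 ≠ 0 :=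
    (sub_pos.2 (pow_lt_pow_left₀ hq.1 hq.snd_pos.le two_ne_zero)).ne'
  rw [Hred_eq]
  simp only [planarState, deformationEnergy, Matrix.cons_val]
  rw [rotationEnergy_planar hne, planarEnergy]
  ring

lemma eq_planarState_of_Hred_le (hp : memB (p 0) (p 1)) (he : 0 ≤ e) (hef : e < f)
    (hdisc₁ : 0 < transverseDiscriminant (e ^ 2) (f ^ 2) (p 0) (p 0 * p 1)⁻¹ (p 1))
    (hdisc₂ : 0 < transverseDiscriminant (e ^ 2) (f ^ 2) (p 1) (p 0 * p 1)⁻¹ (p 0))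
    (hshell : p ∈ momentumShell ((e + f) / 2) |(e - f) / 2|) (hp₆ : 0 < p 6)
    (hle : Hred g p ≤ planarEnergy g (e ^ 2) (f ^ 2) (p 0, p 1)) :
    p = planarState e f (p 0, p 1) := by
  have h₀ := hp.fst_pos.ne'
  have h₁ := hp.snd_pos.ne'
  have hy : 0 < (p 0 * p 1)⁻¹ := inv_pos.2 (mul_pos hp.fst_pos hp.snd_pos)
  have hm : p 4 ^ 2 + p 5 ^ 2 + p 6 ^ 2 = ((e + f) / 2) ^ 2 := by
    rw [← hshell.1, sq_sqrt (by positivity)]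
  have hn : p 7 ^ 2 + p 8 ^ 2 + p 9 ^ 2 = ((e - f) / 2) ^ 2 := by
    rw [← sq_abs ((e - f) / 2), ← hshell.2, sq_sqrt (by positivity)]
  have hdef := deformationEnergy_nonneg h₀ h₁
  rw [Hred_eq, planarEnergy] at hle
  obtain ⟨hm_eq, hn_eq⟩ := eq_planar_of_rotationEnergy_le hy hp.inv_mul_lt hp.1 he hef hdisc₁ hdisc₂
    (m := ![p 4, p 5, p 6]) (n := ![p 7, p 8, p 9]) hm hn hp₆ (by linarith)
  obtain ⟨h₂, h₃⟩ : p 2 = 0 ∧ p 3 = 0 := by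
    by_contra h
    rw [hm_eq, hn_eq, rotationEnergy_planar
      (sub_pos.2 (pow_lt_pow_left₀ hp.1 hp.snd_pos.le two_ne_zero)).ne'] at hle
    linarith [deformationEnergy_pos h₀ h₁ (not_and_or.1 h)]
  ext i
  fin_cases i
  exacts [rfl, rfl, h₂, h₃, congrFun hm_eq 0, congrFun hm_eq 1, congrFun hm_eq 2, congrFun hn_eq 0,
    congrFun hn_eq 1, congrFun hn_eq 2]

lemma continuousAt_transverseDiscriminant {A B x y z : ℝ} (h₁ : x - y ≠ 0) (h₂ : x + y ≠ 0)
    (h₃ : x - z ≠ 0) (h₄ : x + z ≠ 0) :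
    ContinuousAt (fun v : ℝ × ℝ × ℝ ↦ transverseDiscriminant A B v.1 v.2.1 v.2.2) (x, y, z) := by
  have h {u : ℝ × ℝ × ℝ → ℝ} (hu : Continuous u) (hne : u (x, y, z) ≠ 0) :
      ContinuousAt (fun v ↦ 1 / u v ^ 2) (x, y, z) :=
    continuousAt_const.div (hu.continuousAt.pow 2) (pow_ne_zero 2 hne)
  unfold transverseDiscriminant
  have := h (u := fun v ↦ v.1 - v.2.1) (by fun_prop) h₁
  have := h (u := fun v ↦ v.1 + v.2.1) (by fun_prop) h₂
  have := h (u := fun v ↦ v.1 - v.2.2) (by fun_prop) h₃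
  have := h (u := fun v ↦ v.1 + v.2.2) (by fun_prop) h₄
  fun_prop

lemma eventually_transverseDiscriminant_pos (hq : memB q.1 q.2) {A B : ℝ}
    (hdisc₁ : 0 < transverseDiscriminant A B q.1 (q.1 * q.2)⁻¹ q.2)
    (hdisc₂ : 0 < transverseDiscriminant A B q.2 (q.1 * q.2)⁻¹ q.1) :
    ∀ᶠ q' : ℝ × ℝ in 𝓝 q, 0 < transverseDiscriminant A B q'.1 (q'.1 * q'.2)⁻¹ q'.2 ∧
      0 < transverseDiscriminant A B q'.2 (q'.1 * q'.2)⁻¹ q'.1 := by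
  have h₁ := hq.fst_pos
  have h₂ := hq.snd_pos
  have hy : 0 < (q.1 * q.2)⁻¹ := inv_pos.2 (mul_pos h₁ h₂)
  have hinv : ContinuousAt (fun q' : ℝ × ℝ ↦ (q'.1 * q'.2)⁻¹) q :=
    ContinuousAt.inv₀ (by fun_prop) (mul_pos h₁ h₂).ne'
  have hcont₁ := (continuousAt_transverseDiscriminant (A := A) (B := B)
    (sub_pos.2 (hq.inv_mul_lt.trans hq.1)).ne' (add_pos h₁ hy).ne' (sub_pos.2 hq.1).ne'
    (add_pos h₁ h₂).ne').comp_of_eq (continuousAt_fst.prodMk (hinv.prodMk continuousAt_snd)) rfl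
  have hcont₂ := (continuousAt_transverseDiscriminant (A := A) (B := B)
    (sub_pos.2 hq.inv_mul_lt).ne' (add_pos h₂ hy).ne' (sub_neg.2 hq.1).ne
    (add_pos h₂ h₁).ne').comp_of_eq (continuousAt_snd.prodMk (hinv.prodMk continuousAt_fst)) rfl
  exact (hcont₁.eventually (lt_mem_nhds hdisc₁)).and (hcont₂.eventually (lt_mem_nhds hdisc₂))

lemma eventually_Hred_planarState_lt (hq : memB q.1 q.2) (he : 0 ≤ e) (hef : e < f)
    (hdisc₁ : 0 < transverseDiscriminant (e ^ 2) (f ^ 2) q.1 (q.1 * q.2)⁻¹ q.2)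
    (hdisc₂ : 0 < transverseDiscriminant (e ^ 2) (f ^ 2) q.2 (q.1 * q.2)⁻¹ q.1)
    (hmin : ∀ᶠ q' in 𝓝 q, q' ≠ q →
      planarEnergy g (e ^ 2) (f ^ 2) q < planarEnergy g (e ^ 2) (f ^ 2) q') :
    ∀ᶠ p in 𝓝[momentumShell ((e + f) / 2) |(e - f) / 2| \ {planarState e f q}]
      planarState e f q, Hred g (planarState e f q) < Hred g p := by
  have hproj : Tendsto (fun p : Fin 10 → ℝ ↦ (p 0, p 1)) (𝓝 (planarState e f q)) (𝓝 q) :=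
    Continuous.tendsto' (by fun_prop) _ _ rfl
  have hspin : ∀ᶠ p in 𝓝 (planarState e f q), 0 < p 6 :=
    (continuous_apply 6).continuousAt.eventually
      (lt_mem_nhds (show (0 : ℝ) < (e + f) / 2 by linarith))
  rw [eventually_nhdsWithin_iff]
  filter_upwards [hproj.eventually hmin, hproj.eventually (eventually_memB hq), hspin,
    hproj.eventually (eventually_transverseDiscriminant_pos hq hdisc₁ hdisc₂)]
    with p hmin_p hp hp₆ hdisc ⟨hshell, hne⟩
  by_contra! hle
  rw [Hred_planarState g e f hq] at hle
  have hle_p : planarEnergy g (e ^ 2) (f ^ 2) q ≤ planarEnergy g (e ^ 2) (f ^ 2) (p 0, p 1) := by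
    by_cases h : (p 0, p 1) = q
    exacts [h ▸ le_rfl, (hmin_p h).le]
  have hp_eq := eq_planarState_of_Hred_le hp he hef hdisc.1 hdisc.2 hshell hp₆ (hle.trans hle_p)
  have hq_ne : (p 0, p 1) ≠ q := fun h ↦ hne (hp_eq.trans (congrArg _ h))
  rw [hp_eq, Hred_planarState g e f hp] at hle
  exact (hmin_p hq_ne).not_ge hle

end ConstrainedMinimum

section LiapunovStability

/-- The sign changes of the reflection that fixes the momenta in the plane of the first two
semi-axes. -/
def planarReflection : Fin 10 → ℝ := ![1, 1, -1, -1, -1, -1, 1, -1, -1, 1]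

variable {g : ℝ} {p : Fin 10 → ℝ} {q : ℝ × ℝ}

lemma pd_eq_deriv (g : ℝ) (hp : memB (p 0) (p 1)) (i : Fin 10) :
    pd g i p = deriv (fun t : ℝ ↦ Hred g (p + t • Pi.single i 1)) 0 :=
  (differentiableAt_Hred g hp).lineDeriv_eq_fderiv.symm

lemma Hred_planarReflection_mul (g : ℝ) (p : Fin 10 → ℝ) :
    Hred g (planarReflection * p) = Hred g p := by
  simp [Hred, planarReflection]

lemma pd_eq_zero_of_planarReflection (hp : memB (p 0) (p 1)) (hfix : planarReflection * p = p)
    {i : Fin 10} (hi : planarReflection i = -1) : pd g i p = 0 := by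
  have hflip : planarReflection * Pi.single i 1 = -Pi.single i 1 := by
    ext j
    rcases eq_or_ne j i with rfl | hj <;> simp [*]
  have heven (t : ℝ) : Hred g (p + -t • Pi.single i 1) = Hred g (p + t • Pi.single i 1) := by
    rw [← Hred_planarReflection_mul g (p + t • _), mul_add, hfix, mul_smul_comm, hflip, smul_neg,
      neg_smul]
  have hneg := deriv_comp_neg (fun t : ℝ ↦ Hred g (p + t • Pi.single i 1)) 0
  simp only [heven, neg_zero] at hneg
  rw [pd_eq_deriv g hp]
  exact self_eq_neg.1 hneg

lemma fderiv_Hred_RVF (g : ℝ) (p : Fin 10 → ℝ) : fderiv ℝ (Hred g) p (RVF g p) = 0 := by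
  have hsum : fderiv ℝ (Hred g) p (RVF g p) = ∑ i, RVF g p i * pd g i p := by
    conv_lhs => rw [pi_eq_sum_univ' (RVF g p)]
    simp only [map_sum, map_smul, smul_eq_mul, pd]
  rw [hsum]
  simp only [RVF, Fin.isValue, Fin.sum_univ_succ, Matrix.cons_val_zero, Matrix.cons_val_succ,
    Fin.succ_zero_eq_one, Fin.succ_one_eq_two, neg_mul, Fin.reduceSucc, Finset.univ_unique,
    Fin.default_eq_zero, Matrix.cons_val_fin_one, Finset.sum_singleton]
  ring

lemma eqOn_Ico_of_hasDerivAt_zero {φ : ℝ → ℝ} {T : ℝ}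
    (h : ∀ t ∈ Set.Ico 0 T, HasDerivAt φ 0 t) : ∀ t ∈ Set.Ico 0 T, φ t = φ 0 := fun t ht ↦
  constant_of_has_deriv_right_zero
    (fun s hs ↦ (h s (Set.Icc_subset_Ico_right ht.2 hs)).continuousAt.continuousWithinAt)
    (fun s hs ↦ (h s ⟨hs.1, hs.2.trans ht.2⟩).hasDerivWithinAt) t ⟨ht.1, le_rfl⟩

lemma IsSolution.hasDerivAt {γ : ℝ → Fin 10 → ℝ} {s : Set ℝ} (h : IsSolution g γ s) {t : ℝ}
    (ht : t ∈ s) : HasDerivAt γ (RVF g (γ t)) t :=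
  hasDerivAt_pi.2 (h t ht).2

lemma IsSolution.Hred_eq {γ : ℝ → Fin 10 → ℝ} {T : ℝ} (h : IsSolution g γ (Set.Ico 0 T)) :
    ∀ t ∈ Set.Ico 0 T, Hred g (γ t) = Hred g (γ 0) :=
  eqOn_Ico_of_hasDerivAt_zero fun t ht ↦ by
    have := (differentiableAt_Hred g (h t ht).1).hasFDerivAt.comp_hasDerivAt t (h.hasDerivAt ht)
    rwa [fderiv_Hred_RVF] at this

lemma IsSolution.mem_momentumShell {γ : ℝ → Fin 10 → ℝ} {T L R : ℝ}
    (h : IsSolution g γ (Set.Ico 0 T)) (h₀ : γ 0 ∈ momentumShell L R) :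
    ∀ t ∈ Set.Ico 0 T, γ t ∈ momentumShell L R := fun t ht ↦ by
  have hleft := eqOn_Ico_of_hasDerivAt_zero (φ := fun t ↦ γ t 4 ^ 2 + γ t 5 ^ 2 + γ t 6 ^ 2)
    (fun s hs ↦ (((((h s hs).2 4).pow 2).add (((h s hs).2 5).pow 2)).add
      (((h s hs).2 6).pow 2)).congr_deriv (by
        simp only [Nat.cast_ofNat, Nat.add_one_sub_one, pow_one, RVF, Matrix.cons_val]; ring)) t ht
  have hright := eqOn_Ico_of_hasDerivAt_zero (φ := fun t ↦ γ t 7 ^ 2 + γ t 8 ^ 2 + γ t 9 ^ 2)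
    (fun s hs ↦ (((((h s hs).2 7).pow 2).add (((h s hs).2 8).pow 2)).add
      (((h s hs).2 9).pow 2)).congr_deriv (by
        simp only [Nat.cast_ofNat, Nat.add_one_sub_one, pow_one, RVF, Matrix.cons_val]; ring)) t ht
  exact ⟨hleft ▸ h₀.1, hright ▸ h₀.2⟩

theorem exists_forall_dist_lt_of_strict_min {X : Type*} [PseudoMetricSpace X] [ProperSpace X]
    {S : Set X} {f : X → ℝ} {a : X} (hS : IsClosed S) (hf : ∀ᶠ x in 𝓝 a, ContinuousAt f x)
    (hmin : ∀ᶠ x in 𝓝[S \ {a}] a, f a < f x) {ε : ℝ} (hε : 0 < ε) :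
    ∃ δ > 0, ∀ (T : ℝ) (γ : ℝ → X), ContinuousOn γ (Set.Ico 0 T) →
      (∀ t ∈ Set.Ico 0 T, γ t ∈ S) → (∀ t ∈ Set.Ico 0 T, f (γ t) = f (γ 0)) →
      dist (γ 0) a < δ → ∀ t ∈ Set.Ico 0 T, dist (γ t) a < ε := by
  obtain ⟨r, hr, hball⟩ := Metric.eventually_nhds_iff.1 (hf.and (eventually_nhdsWithin_iff.1 hmin))
  obtain ⟨ρ, hρ, hρ_lt⟩ := exists_between (lt_min hε hr)
  have hsphere {x : X} (hx : x ∈ Metric.sphere a ρ) : dist x a < r :=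
    (Metric.mem_sphere.1 hx).trans_lt (hρ_lt.trans_le (min_le_right _ _))
  have hcompact : IsCompact (Metric.sphere a ρ ∩ S) := (isCompact_sphere a ρ).inter_right hS
  obtain ⟨c, hc, hc_le⟩ := hcompact.exists_forall_le' (f := f) (a := f a)
    (fun x hx ↦ (hball (hsphere hx.1)).1.continuousWithinAt)
    (fun x hx ↦ (hball (hsphere hx.1)).2 ⟨hx.2, fun h ↦ hρ.ne (by
      rw [← Metric.mem_sphere.1 hx.1, Set.mem_singleton_iff.1 h, dist_self])⟩)
  obtain ⟨δ, hδ, hδ_lt⟩ := Metric.eventually_nhds_iff.1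
    (hf.self_of_nhds.eventually (gt_mem_nhds hc))
  refine ⟨min δ ρ, lt_min hδ hρ, fun T γ hγ hγS hγf hγ₀ t ht ↦ ?_⟩
  by_contra! hεt
  have hdist : ContinuousOn (fun s ↦ dist (γ s) a) (Set.Icc 0 t) :=
    (continuous_id.dist continuous_const).comp_continuousOn
      (hγ.mono (Set.Icc_subset_Ico_right ht.2))
  obtain ⟨s, hs, hsρ⟩ := intermediate_value_Icc ht.1 hdist
    ⟨(hγ₀.trans_le (min_le_right _ _)).le,
      ((hρ_lt.trans_le (min_le_left _ _)).trans_le hεt).le⟩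
  have hsT := Set.Icc_subset_Ico_right ht.2 hs
  have hcs := hc_le (γ s) ⟨hsρ, hγS s hsT⟩
  rw [hγf s hsT] at hcs
  exact (hδ_lt (hγ₀.trans_le (min_le_left _ _))).not_ge hcs

lemma isLocalMinOn_of_strict_min {X : Type*} [TopologicalSpace X] {S : Set X} {f : X → ℝ} {a : X}
    (hmin : ∀ᶠ x in 𝓝[S \ {a}] a, f a < f x) : IsLocalMinOn f S a := by
  rw [eventually_nhdsWithin_iff] at hmin
  filter_upwards [nhdsWithin_le_nhds hmin, self_mem_nhdsWithin] with x hx hxS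
  rcases eq_or_ne x a with rfl | hne
  exacts [le_rfl, (hx ⟨hxS, hne⟩).le]

lemma isClosed_momentumShell (L R : ℝ) : IsClosed (momentumShell L R) :=
  (isClosed_eq (by fun_prop) continuous_const).inter (isClosed_eq (by fun_prop) continuous_const)

lemma planarState_mem_momentumShell {e f : ℝ} (h : 0 ≤ e + f) (q : ℝ × ℝ) :
    planarState e f q ∈ momentumShell ((e + f) / 2) |(e - f) / 2| := by
  constructor
  · simp [planarState, sqrt_sq (div_nonneg h zero_le_two)]
  · simp [planarState, sqrt_sq_eq_abs]

lemma planarReflection_mul_planarState (e f : ℝ) (q : ℝ × ℝ) :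
    planarReflection * planarState e f q = planarState e f q := by
  ext i
  fin_cases i <;> simp [planarReflection, planarState]

lemma pd_shape_planarState {e f : ℝ} (hq : memB q.1 q.2) (hef : 0 ≤ e + f)
    (hmin : IsLocalMinOn (Hred g) (momentumShell ((e + f) / 2) |(e - f) / 2|) (planarState e f q))
    {i : Fin 10} (hi : i = 0 ∨ i = 1) : pd g i (planarState e f q) = 0 := by
  have hline : Tendsto (fun t : ℝ ↦ planarState e f q + t • Pi.single i 1) (𝓝 0)
      (𝓝[momentumShell ((e + f) / 2) |(e - f) / 2|] (planarState e f q)) := by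
    refine tendsto_nhdsWithin_iff.2
      ⟨Continuous.tendsto' (by fun_prop) _ _ (by rw [zero_smul, add_zero]), .of_forall fun t ↦ ?_⟩
    have hmem := planarState_mem_momentumShell hef q
    rcases hi with rfl | rfl <;> simpa [momentumShell] using hmem
  rw [pd_eq_deriv g hq]
  refine IsLocalMin.deriv_eq_zero ?_
  filter_upwards [hline.eventually hmin] with t ht
  rwa [zero_smul, add_zero]

lemma RVF_planarState {e f : ℝ} (hq : memB q.1 q.2) (hef : 0 ≤ e + f)
    (hmin : IsLocalMinOn (Hred g) (momentumShell ((e + f) / 2) |(e - f) / 2|)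
      (planarState e f q)) :
    RVF g (planarState e f q) = 0 := by
  have hshape {i : Fin 10} (hi : i = 0 ∨ i = 1) := pd_shape_planarState hq hef hmin hi
  have hreflect {i : Fin 10} (hi : planarReflection i = -1) : pd g i (planarState e f q) = 0 :=
    pd_eq_zero_of_planarReflection hq (planarReflection_mul_planarState e f q) hi
  have hzero {i : Fin 10} (hi : planarReflection i = -1) : planarState e f q i = 0 := by
    have := congrFun (planarReflection_mul_planarState e f q) i
    rw [Pi.mul_apply, hi, neg_one_mul] at this
    exact neg_eq_self.1 this
  rw [RVF, hshape (.inl rfl), hshape (.inr rfl), hreflect (i := 2) rfl,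
    hreflect (i := 3) rfl, hreflect (i := 4) rfl, hreflect (i := 5) rfl, hreflect (i := 7) rfl,
    hreflect (i := 8) rfl, hzero (i := 4) rfl, hzero (i := 5) rfl, hzero (i := 7) rfl,
    hzero (i := 8) rfl]
  ext i
  fin_cases i <;> simp

lemma liapunovStable_of_strict_min {L R : ℝ} (hp : memB (p 0) (p 1))
    (hmin : ∀ᶠ p' in 𝓝[momentumShell L R \ {p}] p, Hred g p < Hred g p') :
    LiapunovStable g L R p := fun ε hε ↦ by
  have hproj : Continuous fun p : Fin 10 → ℝ ↦ (p 0, p 1) := by fun_prop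
  have hcont : ∀ᶠ p' in 𝓝 p, ContinuousAt (Hred g) p' :=
    (hproj.continuousAt.eventually (eventually_memB (q := (p 0, p 1)) hp)).mono fun _ h ↦
      (differentiableAt_Hred g h).continuousAt
  obtain ⟨δ, hδ, hstable⟩ :=
    exists_forall_dist_lt_of_strict_min (isClosed_momentumShell L R) hcont hmin hε
  exact ⟨δ, hδ, fun T γ hγ hL hR ↦ hstable T γ
    (fun t ht ↦ (hγ.hasDerivAt ht).continuousAt.continuousWithinAt)
    (hγ.mem_momentumShell ⟨hL, hR⟩) hγ.Hred_eq⟩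

/-- The equilibrium of the `S₃` Riemann ellipsoid of shape `q`. -/
noncomputable def riemannEllipsoid (g : ℝ) (q : ℝ × ℝ) : Fin 10 → ℝ :=
  planarState √(GSp g q.1 (q.1 * q.2)⁻¹ q.2) √(GSm g q.1 (q.1 * q.2)⁻¹ q.2) q

lemma eventually_Hred_riemannEllipsoid_lt (hg : 0 < g) (hq : memB q.1 q.2)
    (hG : 0 ≤ GSp g q.1 (q.1 * q.2)⁻¹ q.2) :
    ∀ᶠ p in 𝓝[momentumShell (NSp g q.1 (q.1 * q.2)⁻¹ q.2) |NSm g q.1 (q.1 * q.2)⁻¹ q.2| \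
      {riemannEllipsoid g q}] riemannEllipsoid g q, Hred g (riemannEllipsoid g q) < Hred g p := by
  have hy : 0 < (q.1 * q.2)⁻¹ := inv_pos.2 (mul_pos hq.fst_pos hq.snd_pos)
  have hlt := GSp_lt_GSm hg hy hq.inv_mul_lt hq.1 hG
  have hdisc₁ := transverseDiscriminant_pos hg hy (hq.inv_mul_lt.trans hq.1) hq.inv_mul_lt hq.1.ne'
  have hdisc₂ := transverseDiscriminant_pos hg hy hq.inv_mul_lt (hq.inv_mul_lt.trans hq.1) hq.1.ne
  rw [GSp_swap, GSm_swap] at hdisc₂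
  have hmin := eventually_planarEnergy_lt hg hq hG
  refine eventually_Hred_planarState_lt hq (sqrt_nonneg _) (sqrt_lt_sqrt hG hlt) ?_ ?_ ?_ <;>
    rwa [sq_sqrt hG, sq_sqrt (hG.trans hlt.le)]

end LiapunovStability

/-- On the existence region `B_{S₃}` (`G^S₊(b₁,b₃,b₂) ≥ 0`), with
`N₊ = N^S₊(b₁,b₃,b₂)`, `N₋ = N^S₋(b₁,b₃,b₂)`, the point
`p* = (b₁,b₂,0,0, 0,0,N₊, 0,0,N₋)` is an equilibrium of the reduced equations and is
Liapunov stable relative to `S_{L,R}` with `L = N₊`, `R = |N₋|`. -/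
theorem stmt_9 (g b1 b2 b3 : ℝ) (hg : 0 < g) (hB : memB b1 b2) (hb3 : b3 = (b1 * b2)⁻¹)
    (h0 : 0 ≤ GSp g b1 b3 b2) :
    RVF g ![b1, b2, 0, 0, 0, 0, NSp g b1 b3 b2, 0, 0, NSm g b1 b3 b2] = 0 ∧
    LiapunovStable g (NSp g b1 b3 b2) |NSm g b1 b3 b2|
      ![b1, b2, 0, 0, 0, 0, NSp g b1 b3 b2, 0, 0, NSm g b1 b3 b2] := by
  subst hb3
  have hmin := eventually_Hred_riemannEllipsoid_lt (q := (b1, b2)) hg hB h0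
  exact ⟨RVF_planarState (q := (b1, b2)) hB (add_nonneg (sqrt_nonneg _) (sqrt_nonneg _))
    (isLocalMinOn_of_strict_min hmin), liapunovStable_of_strict_min hB hmin⟩
end

section
/- Let ω₁, ω₂, ω₃ > 0, μ < 0, and let Q₁, …, Q₇ ∈ ℝ with Q₄ < 0, and q₈, q₉, q₁₀ ∈ ℝ. Define H : ℝ⁸ → ℝ in canonical coordinates (x₁, x₂, x₃, x₄, y₁, y₂, y₃, y₄), writing I_j = (x_j² + y_j²)/2 for j = 1, 2, 3, by H = ω₁I₁ + ω₂I₂ + ω₃I₃ − ½(μ·x₄² + y₄²) − ½( Q₁I₁² + Q₂I₂² + Q₃I₃² + Q₅I₁I₂ + Q₆I₁I₃ + Q₇I₂I₃ + (q₈I₁ + q₉I₂ + q₁₀I₃)·x₄² − Q₄·x₄⁴ ), and let X_H be its Hamiltonian vector field (x_j' = ∂H/∂y_j, y_j' = −∂H/∂x_j). Then the two points E± with x₁ = x₂ = x₃ = y₁ = y₂ = y₃ = y₄ = 0 and x₄ = ±√(μ/(2Q₄)) are equilibria of X_H, and the characteristic polynomial of the linearisation DX_H(E±) equals (λ² − 2μ)·∏_{j=1}^{3}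 (λ² + (ω_j − q_{j+7}·μ/(4Q₄))²). In particular, since μ < 0, every eigenvalue of DX_H(E±) is purely imaginary. (This is the truncated normal form H⁴ of the co-parallel S₂ Riemann ellipsoids written in real variables, with μ = ω₄² < 0 below the bifurcation curve G = 0; the equilibria E± correspond to the type-III Riemann ellipsoids branching off the S₂ family in the global pitchfork bifurcation.) -/
open Matrix

/-- The truncated normal form `H⁴` of the co-parallel `S₂` Riemann ellipsoids, in canonical
coordinates `(x₁,…,x₄,y₁,…,y₄)` on `ℝ⁸` (`p 0,…,p 3 = x₁,…,x₄`, `p 4,…,p 7 = y₁,…,y₄`),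
with `Iⱼ = (xⱼ² + yⱼ²)/2`. -/
noncomputable def H4nf (ω₁ ω₂ ω₃ μ Q₁ Q₂ Q₃ Q₄ Q₅ Q₆ Q₇ q₈ q₉ q₁₀ : ℝ)
    (p : Fin 8 → ℝ) : ℝ :=
  let I1 := (p 0 ^ 2 + p 4 ^ 2) / 2
  let I2 := (p 1 ^ 2 + p 5 ^ 2) / 2
  let I3 := (p 2 ^ 2 + p 6 ^ 2) / 2
  let x4 := p 3
  let y4 := p 7
  ω₁ * I1 + ω₂ * I2 + ω₃ * I3 - (μ * x4 ^ 2 + y4 ^ 2) / 2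
    - (Q₁ * I1 ^ 2 + Q₂ * I2 ^ 2 + Q₃ * I3 ^ 2
        + Q₅ * I1 * I2 + Q₆ * I1 * I3 + Q₇ * I2 * I3
        + (q₈ * I1 + q₉ * I2 + q₁₀ * I3) * x4 ^ 2 - Q₄ * x4 ^ 4) / 2

/-- The Hamiltonian vector field of `H⁴`: `xⱼ' = ∂H/∂yⱼ`, `yⱼ' = −∂H/∂xⱼ`. -/
noncomputable def XH4 (ω₁ ω₂ ω₃ μ Q₁ Q₂ Q₃ Q₄ Q₅ Q₆ Q₇ q₈ q₉ q₁₀ : ℝ)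
    (p : Fin 8 → ℝ) : Fin 8 → ℝ :=
  let H := H4nf ω₁ ω₂ ω₃ μ Q₁ Q₂ Q₃ Q₄ Q₅ Q₆ Q₇ q₈ q₉ q₁₀
  ![fderiv ℝ H p (Pi.single 4 1), fderiv ℝ H p (Pi.single 5 1),
    fderiv ℝ H p (Pi.single 6 1), fderiv ℝ H p (Pi.single 7 1),
    -fderiv ℝ H p (Pi.single 0 1), -fderiv ℝ H p (Pi.single 1 1),
    -fderiv ℝ H p (Pi.single 2 1), -fderiv ℝ H p (Pi.single 3 1)]

/-- The linearisation (Jacobian matrix) of the Hamiltonian vector field of `H⁴` at `p`. -/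
noncomputable def DXH4 (ω₁ ω₂ ω₃ μ Q₁ Q₂ Q₃ Q₄ Q₅ Q₆ Q₇ q₈ q₉ q₁₀ : ℝ)
    (p : Fin 8 → ℝ) : Matrix (Fin 8) (Fin 8) ℝ :=
  Matrix.of fun i j =>
    fderiv ℝ (fun q => XH4 ω₁ ω₂ ω₃ μ Q₁ Q₂ Q₃ Q₄ Q₅ Q₆ Q₇ q₈ q₉ q₁₀ q i) p (Pi.single j 1)

/-!
Each component of the gradient of `H⁴` is the coordinate itself times a polynomial factor, so on the
`x₄`-axis the Hessian of `H⁴` is diagonal. The linearisation there is therefore block antidiagonal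
with diagonal blocks `A` and `B`, and its characteristic polynomial is that of `A * B` evaluated at
`λ²`, i.e. `∏ₖ (λ² - cₖ)` with `cₖ` real. Its roots are all imaginary exactly when no `cₖ` is
positive; three of the `cₖ` are negatives of squares and the fourth is `2μ` at `E±`.
-/

section CharacteristicPolynomial

open Polynomial

variable {R n : Type*} [CommRing R] [Fintype n] [DecidableEq n]

theorem charpoly_fromBlocks_zero_zero (A B : Matrix n n R) :
    (fromBlocks 0 A B 0).charpoly = expand R 2 (A * B).charpoly := by
  set A' : Matrix n n R[X] := A.map C
  set B' : Matrix n n R[X] := B.map C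
  set t : Matrix n n R[X] := scalar n X with ht
  have hcharmatrix : (fromBlocks 0 A B 0).charmatrix = fromBlocks t (-A') (-B') t := by
    rw [charmatrix_fromBlocks]
    simp [charmatrix, t, A', B']
  have hexpand : expand R 2 (A * B).charpoly = (t ^ 2 - A' * B').det := by
    rw [Matrix.charpoly, AlgHom.map_det]
    congr 1
    ext i j
    simp [t, A', B', charmatrix, diagonal_pow, diagonal_apply, apply_ite, mul_apply]
  have heliminate : fromBlocks t (-A') (-B') t * fromBlocks t 0 B' 1 =
      fromBlocks (t ^ 2 - A' * B') (-A') 0 t := by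
    have hcomm : B' * t = t * B' := (scalar_commute X (Commute.all X) B').eq.symm
    simp [fromBlocks_multiply, hcomm, sq, sub_eq_add_neg]
  have hdet := congrArg Matrix.det heliminate
  rw [det_mul, det_fromBlocks_zero₁₂, det_fromBlocks_zero₂₁, det_one, mul_one] at hdet
  rw [Matrix.charpoly, hcharmatrix, hexpand]
  refine (isRegular_X_pow (Fintype.card n)).right ?_
  simpa [ht] using hdet

theorem charpoly_fromBlocks_zero_diagonal (a b : n → R) :
    (fromBlocks 0 (diagonal a) (diagonal b) 0).charpoly = ∏ i, (X ^ 2 - C (a i * b i)) := by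
  simp [charpoly_fromBlocks_zero_zero, diagonal_mul_diagonal, charpoly_diagonal]

theorem det_smul_one_sub_map_algebraMap {S : Type*} [CommRing S] [Algebra R S]
    (M : Matrix n n R) (z : S) :
    (z • (1 : Matrix n n S) - M.map (algebraMap R S)).det = aeval z M.charpoly := by
  rw [smul_one_eq_diagonal, ← scalar_apply, ← eval_charpoly, charpoly_map, eval_map_algebraMap]

end CharacteristicPolynomial

open scoped ComplexOrder in
theorem re_eq_zero_iff_of_sq_eq_ofReal {z : ℂ} {c : ℝ} (h : z ^ 2 = c) : z.re = 0 ↔ c ≤ 0 := by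
  rw [← Complex.sq_nonpos_iff, h, ← Complex.ofReal_zero, Complex.real_le_real]

theorem forall_prod_sq_sub_eq_zero_re_eq_zero_iff {ι : Type*} (s : Finset ι) (c : ι → ℝ) :
    (∀ z : ℂ, ∏ i ∈ s, (z ^ 2 - c i) = 0 → z.re = 0) ↔ ∀ i ∈ s, c i ≤ 0 := by
  simp only [Finset.prod_eq_zero_iff, sub_eq_zero]
  constructor
  · intro h i hi
    obtain ⟨z, hz⟩ := IsAlgClosed.exists_pow_nat_eq (c i : ℂ) two_pos
    exact (re_eq_zero_iff_of_sq_eq_ofReal hz).1 (h z ⟨i, hi, hz⟩)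
  · rintro h z ⟨i, hi, hz⟩
    exact (re_eq_zero_iff_of_sq_eq_ofReal hz).2 (h i hi)

theorem fderiv_apply_mul {𝕜 ι : Type*} [NontriviallyNormedField 𝕜] [Finite ι] (i : ι)
    {G : (ι → 𝕜) → 𝕜} {p : ι → 𝕜} (hG : DifferentiableAt 𝕜 G p) (v : ι → 𝕜) :
    fderiv 𝕜 (fun q => q i * G q) p v = p i * fderiv 𝕜 G p v + G p * v i := by
  have := Fintype.ofFinite ι
  simp [fderiv_fun_mul (differentiableAt_apply i p) hG, (hasFDerivAt_apply i p).fderiv]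

section NormalForm

variable (ω₁ ω₂ ω₃ μ Q₁ Q₂ Q₃ Q₄ Q₅ Q₆ Q₇ q₈ q₉ q₁₀ : ℝ)

/-- The factors `Gᵢ` in `∂H⁴/∂pᵢ = pᵢ * Gᵢ(p)`. They exist because `H⁴` depends on `p` only through
the squares of the coordinates: `Gᵢ` is the derivative of `H⁴` with respect to `pᵢ² / 2`. -/
noncomputable def gradientFactor (p : Fin 8 → ℝ) : Fin 8 → ℝ :=
  let I1 := (p 0 ^ 2 + p 4 ^ 2) / 2
  let I2 := (p 1 ^ 2 + p 5 ^ 2) / 2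
  let I3 := (p 2 ^ 2 + p 6 ^ 2) / 2
  let G1 := ω₁ - (2 * Q₁ * I1 + Q₅ * I2 + Q₆ * I3 + q₈ * p 3 ^ 2) / 2
  let G2 := ω₂ - (2 * Q₂ * I2 + Q₅ * I1 + Q₇ * I3 + q₉ * p 3 ^ 2) / 2
  let G3 := ω₃ - (2 * Q₃ * I3 + Q₆ * I1 + Q₇ * I2 + q₁₀ * p 3 ^ 2) / 2
  let G4 := -μ - (q₈ * I1 + q₉ * I2 + q₁₀ * I3) + 2 * Q₄ * p 3 ^ 2
  ![G1, G2, G3, G4, G1, G2, G3, -1]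

/-- The frequency with which a normal mode of frequency `ω` at the origin oscillates about the point
`x₄ = s` of the `x₄`-axis, when `H⁴` couples its action to `x₄²` with coefficient `-q / 2`. -/
noncomputable def axisFrequency (ω q s : ℝ) : ℝ := ω - q * s ^ 2 / 2

local notation "𝓗" => H4nf ω₁ ω₂ ω₃ μ Q₁ Q₂ Q₃ Q₄ Q₅ Q₆ Q₇ q₈ q₉ q₁₀
local notation "𝓧" => XH4 ω₁ ω₂ ω₃ μ Q₁ Q₂ Q₃ Q₄ Q₅ Q₆ Q₇ q₈ q₉ q₁₀
local notation "𝓓𝓧" => DXH4 ω₁ ω₂ ω₃ μ Q₁ Q₂ Q₃ Q₄ Q₅ Q₆ Q₇ q₈ q₉ q₁₀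
local notation "𝓖" => gradientFactor ω₁ ω₂ ω₃ μ Q₁ Q₂ Q₃ Q₄ Q₅ Q₆ Q₇ q₈ q₉ q₁₀

theorem fderiv_H4nf_single (p : Fin 8 → ℝ) (i : Fin 8) :
    fderiv ℝ 𝓗 p (Pi.single i 1) = p i * 𝓖 p i := by
  unfold H4nf
  simp (disch := fun_prop) only [fderiv_fun_add, fderiv_fun_sub, fderiv_fun_mul, fderiv_fun_pow,
    div_eq_mul_inv, fderiv_fun_const, fderiv_apply]
  fin_cases i <;> simp [gradientFactor] <;> ring

theorem XH4_castAdd (p : Fin 8 → ℝ) (k : Fin 4) :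
    𝓧 p (Fin.castAdd 4 k) = p (Fin.natAdd 4 k) * 𝓖 p (Fin.natAdd 4 k) := by
  rw [← fderiv_H4nf_single]
  fin_cases k <;> rfl

theorem XH4_natAdd (p : Fin 8 → ℝ) (k : Fin 4) :
    𝓧 p (Fin.natAdd 4 k) = -(p (Fin.castAdd 4 k) * 𝓖 p (Fin.castAdd 4 k)) := by
  rw [← fderiv_H4nf_single]
  fin_cases k <;> rfl

theorem XH4_axis_eq_zero {s : ℝ} (hs : 2 * Q₄ * s ^ 2 = μ) :
    𝓧 ![0, 0, 0, s, 0, 0, 0, 0] = 0 := by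
  ext i
  obtain ⟨k | k, rfl⟩ := (finSumFinEquiv (m := 4) (n := 4)).surjective i
  · rw [finSumFinEquiv_apply_left, XH4_castAdd]
    fin_cases k <;> simp
  · rw [finSumFinEquiv_apply_right, XH4_natAdd]
    fin_cases k <;> simp [gradientFactor, hs]

theorem differentiable_gradientFactor (i : Fin 8) : Differentiable ℝ fun p => 𝓖 p i := by
  fin_cases i <;> simp only [gradientFactor] <;> dsimp <;> fun_prop

theorem fderiv_gradientFactor_three_axis (s : ℝ) (v : Fin 8 → ℝ) :
    fderiv ℝ (fun p => 𝓖 p 3) ![0, 0, 0, s, 0, 0, 0, 0] v = 4 * Q₄ * s * v 3 := by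
  simp only [gradientFactor, cons_val]
  simp (disch := fun_prop) only [fderiv_fun_add, fderiv_fun_sub, fderiv_fun_mul, fderiv_fun_pow,
    div_eq_mul_inv, fderiv_fun_const, fderiv_apply]
  simp only [cons_val, fderiv_fun_id, ContinuousLinearMap.comp_id, ContinuousLinearMap.comp_zero,
    Pi.zero_apply, _root_.add_apply, _root_.sub_apply, _root_.smul_apply, _root_.zero_apply,
    ContinuousLinearMap.proj_apply, smul_eq_mul, nsmul_eq_mul]
  ring

theorem fderiv_mul_gradientFactor_axis (s : ℝ) (i : Fin 8) (v : Fin 8 → ℝ) :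
    fderiv ℝ (fun p => p i * 𝓖 p i) ![0, 0, 0, s, 0, 0, 0, 0] v =
      ![axisFrequency ω₁ q₈ s, axisFrequency ω₂ q₉ s, axisFrequency ω₃ q₁₀ s, 6 * Q₄ * s ^ 2 - μ,
        axisFrequency ω₁ q₈ s, axisFrequency ω₂ q₉ s, axisFrequency ω₃ q₁₀ s, -1] i * v i := by
  rw [fderiv_apply_mul i (differentiable_gradientFactor ..)]
  by_cases hi : i = 3
  · subst hi
    rw [fderiv_gradientFactor_three_axis]
    simp only [gradientFactor, cons_val]
    ring
  · fin_cases i <;> simp [gradientFactor, axisFrequency] at hi ⊢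

theorem DXH4_axis_submatrix (s : ℝ) :
    (𝓓𝓧 ![0, 0, 0, s, 0, 0, 0, 0]).submatrix (finSumFinEquiv (m := 4) (n := 4)) finSumFinEquiv =
      fromBlocks 0
        (diagonal ![axisFrequency ω₁ q₈ s, axisFrequency ω₂ q₉ s, axisFrequency ω₃ q₁₀ s, -1])
        (diagonal ![-axisFrequency ω₁ q₈ s, -axisFrequency ω₂ q₉ s, -axisFrequency ω₃ q₁₀ s,
          μ - 6 * Q₄ * s ^ 2]) 0 := by
  ext (k | k) (l | l)
  all_goals
    simp only [DXH4, submatrix_apply, of_apply, finSumFinEquiv_apply_left,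
      finSumFinEquiv_apply_right, XH4_castAdd, XH4_natAdd, fderiv_fun_neg, _root_.neg_apply,
      fderiv_mul_gradientFactor_axis]
    fin_cases k <;> fin_cases l <;> simp

theorem charpoly_DXH4_axis (s : ℝ) :
    (𝓓𝓧 ![0, 0, 0, s, 0, 0, 0, 0]).charpoly = ∏ k : Fin 4, (Polynomial.X ^ 2 - Polynomial.C
      (![-axisFrequency ω₁ q₈ s ^ 2, -axisFrequency ω₂ q₉ s ^ 2, -axisFrequency ω₃ q₁₀ s ^ 2,
        6 * Q₄ * s ^ 2 - μ] k)) := by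
  rw [← charpoly_reindex (finSumFinEquiv (m := 4) (n := 4)).symm, reindex_apply, Equiv.symm_symm,
    DXH4_axis_submatrix, charpoly_fromBlocks_zero_diagonal]
  refine Finset.prod_congr rfl fun k _ => ?_
  fin_cases k <;> simp [sq]

theorem det_smul_one_sub_DXH4_axis (s : ℝ) (z : ℂ) :
    (z • (1 : Matrix (Fin 8) (Fin 8) ℂ)
        - (𝓓𝓧 ![0, 0, 0, s, 0, 0, 0, 0]).map ((↑) : ℝ → ℂ)).det =
      ∏ k : Fin 4, (z ^ 2 -
        (![-axisFrequency ω₁ q₈ s ^ 2, -axisFrequency ω₂ q₉ s ^ 2, -axisFrequency ω₃ q₁₀ s ^ 2,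
          6 * Q₄ * s ^ 2 - μ] k : ℝ)) := by
  refine (det_smul_one_sub_map_algebraMap _ z).trans ?_
  simp only [charpoly_DXH4_axis, map_prod, map_sub, map_pow, Polynomial.aeval_X, Polynomial.aeval_C,
    Complex.coe_algebraMap]

end NormalForm

theorem stmt_19_general (ω₁ ω₂ ω₃ μ Q₁ Q₂ Q₃ Q₄ Q₅ Q₆ Q₇ q₈ q₉ q₁₀ : ℝ) (hQ₄ : Q₄ ≠ 0) {s : ℝ}
    (hs : s ^ 2 = μ / (2 * Q₄)) :
    XH4 ω₁ ω₂ ω₃ μ Q₁ Q₂ Q₃ Q₄ Q₅ Q₆ Q₇ q₈ q₉ q₁₀ ![0, 0, 0, s, 0, 0, 0, 0] = 0 ∧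
    (∀ lam : ℂ,
      (lam • (1 : Matrix (Fin 8) (Fin 8) ℂ)
          - (DXH4 ω₁ ω₂ ω₃ μ Q₁ Q₂ Q₃ Q₄ Q₅ Q₆ Q₇ q₈ q₉ q₁₀
              ![0, 0, 0, s, 0, 0, 0, 0]).map ((↑) : ℝ → ℂ)).det
        = (lam ^ 2 - 2 * (μ : ℂ)) *
            ((lam ^ 2 + ((ω₁ - q₈ * μ / (4 * Q₄) : ℝ) : ℂ) ^ 2) *
              (lam ^ 2 + ((ω₂ - q₉ * μ / (4 * Q₄) : ℝ) : ℂ) ^ 2) *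
              (lam ^ 2 + ((ω₃ - q₁₀ * μ / (4 * Q₄) : ℝ) : ℂ) ^ 2))) ∧
    ((∀ lam : ℂ,
      (lam • (1 : Matrix (Fin 8) (Fin 8) ℂ)
          - (DXH4 ω₁ ω₂ ω₃ μ Q₁ Q₂ Q₃ Q₄ Q₅ Q₆ Q₇ q₈ q₉ q₁₀
              ![0, 0, 0, s, 0, 0, 0, 0]).map ((↑) : ℝ → ℂ)).det = 0 →
        lam.re = 0) ↔ μ ≤ 0) := by
  have hμ : 2 * Q₄ * s ^ 2 = μ := by rw [hs]; field_simp
  have hexponent : 6 * Q₄ * s ^ 2 - μ = 2 * μ := by linear_combination 3 * hμ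
  have hfrequency (ω q : ℝ) : axisFrequency ω q s = ω - q * μ / (4 * Q₄) := by
    rw [axisFrequency, hs]
    ring
  refine ⟨XH4_axis_eq_zero (hs := hμ) .., fun lam => ?_, ?_⟩
  · rw [det_smul_one_sub_DXH4_axis, hexponent, hfrequency, hfrequency, hfrequency,
      Fin.prod_univ_four]
    simp only [cons_val]
    push_cast
    ring
  · simp only [det_smul_one_sub_DXH4_axis, forall_prod_sq_sub_eq_zero_re_eq_zero_iff, hexponent]
    simp [Fin.forall_fin_succ, sq_nonneg, mul_nonpos_iff]

/-- For `ω₁,ω₂,ω₃ > 0`, `μ < 0`, `Q₄ < 0`, the two points `E±` with all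
coordinates zero except `x₄ = ±√(μ/(2Q₄))` are equilibria of the Hamiltonian vector field
of `H⁴`, the characteristic polynomial of the linearisation there is
`(λ² − 2μ)·∏ⱼ(λ² + (ωⱼ − q_{j+7}μ/(4Q₄))²)`, and (since `μ < 0`) every eigenvalue of the
linearisation is purely imaginary. -/
theorem stmt_19 (ω₁ ω₂ ω₃ μ Q₁ Q₂ Q₃ Q₄ Q₅ Q₆ Q₇ q₈ q₉ q₁₀ : ℝ)
    (hω₁ : 0 < ω₁) (hω₂ : 0 < ω₂) (hω₃ : 0 < ω₃) (hμ : μ < 0) (hQ₄ : Q₄ < 0) :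
    ∀ s : ℝ, s ^ 2 = μ / (2 * Q₄) →
      XH4 ω₁ ω₂ ω₃ μ Q₁ Q₂ Q₃ Q₄ Q₅ Q₆ Q₇ q₈ q₉ q₁₀ ![0, 0, 0, s, 0, 0, 0, 0] = 0 ∧
      (∀ lam : ℂ,
        (lam • (1 : Matrix (Fin 8) (Fin 8) ℂ)
            - (DXH4 ω₁ ω₂ ω₃ μ Q₁ Q₂ Q₃ Q₄ Q₅ Q₆ Q₇ q₈ q₉ q₁₀
                ![0, 0, 0, s, 0, 0, 0, 0]).map ((↑) : ℝ → ℂ)).det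
          = (lam ^ 2 - 2 * (μ : ℂ)) *
              ((lam ^ 2 + ((ω₁ - q₈ * μ / (4 * Q₄) : ℝ) : ℂ) ^ 2) *
                (lam ^ 2 + ((ω₂ - q₉ * μ / (4 * Q₄) : ℝ) : ℂ) ^ 2) *
                (lam ^ 2 + ((ω₃ - q₁₀ * μ / (4 * Q₄) : ℝ) : ℂ) ^ 2))) ∧
      (∀ lam : ℂ,
        (lam • (1 : Matrix (Fin 8) (Fin 8) ℂ)
            - (DXH4 ω₁ ω₂ ω₃ μ Q₁ Q₂ Q₃ Q₄ Q₅ Q₆ Q₇ q₈ q₉ q₁₀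
                ![0, 0, 0, s, 0, 0, 0, 0]).map ((↑) : ℝ → ℂ)).det = 0 →
          lam.re = 0) :=
  fun _ hs => (stmt_19_general ω₁ ω₂ ω₃ μ Q₁ Q₂ Q₃ Q₄ Q₅ Q₆ Q₇ q₈ q₉ q₁₀ hQ₄.ne hs).imp_right
    (And.imp_right fun h => h.2 hμ.le)
end
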